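/- arXiv:0905.1489 — 3 statements merged into one kernel-verified Lean document; each statement's English description precedes it below -/
import Mathlib

section
/- Let (C, δ, β) be a mixed complex over κ. For every integer r ≥ 0, the canonical linear map from the direct limit colim_k ^+H^{r+2k}_β (taken over the maps S induced by the inclusions ^+C^*_β ↪ ^+C^{*+2}_β placing a tuple into the lower components) to PH^r, induced by the inclusions ^+C^{r+2k} ⊆ PC^{r+2k} = PC^r, is an isomorphism of κ-vector spaces. -/
open LinearMap DirectSum

namespace CDGA

variable {κ : Type} [Field κ]

/-- Cast along an equality of indices. -/
def fcast {ι : Type} {C : ι → Type} [∀ i, AddCommGroup (C i)] [∀ i, Module κ (C i)]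
    {m n : ι} (h : m = n) : C m →ₗ[κ] C n := by subst h; exact LinearMap.id

section CohomologyDefs

variable {C : ℤ → Type} [∀ n, AddCommGroup (C n)] [∀ n, Module κ (C n)]

/-- Cocycles of a cochain complex. -/
def cocycles (d : ∀ n : ℤ, C n →ₗ[κ] C (n + 1)) (r : ℤ) : Submodule κ (C r) :=
  LinearMap.ker (d r)

/-- Coboundaries of a cochain complex. -/
def cobound (d : ∀ n : ℤ, C n →ₗ[κ] C (n + 1)) (r : ℤ) : Submodule κ (C r) :=
  LinearMap.range ((fcast (show r - 1 + 1 = r by ring)).comp (d (r - 1)))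

/-- Cohomology of a cochain complex in degree `r`. -/
abbrev cohomology (d : ∀ n : ℤ, C n →ₗ[κ] C (n + 1)) (r : ℤ) : Type :=
  ↥(cocycles d r) ⧸ (cobound d r).comap (cocycles d r).subtype

/-- Cycles of a chain complex (degree `-1` differential). -/
def bcycles (d : ∀ n : ℤ, C n →ₗ[κ] C (n - 1)) (r : ℤ) : Submodule κ (C r) :=
  LinearMap.ker (d r)

/-- Boundaries of a chain complex. -/
def bbound (d : ∀ n : ℤ, C n →ₗ[κ] C (n - 1)) (r : ℤ) : Submodule κ (C r) :=
  LinearMap.range ((fcast (show r + 1 - 1 = r by ring)).comp (d (r + 1)))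

/-- Homology of a chain complex in degree `r`. -/
abbrev homologyC (d : ∀ n : ℤ, C n →ₗ[κ] C (n - 1)) (r : ℤ) : Type :=
  ↥(bcycles d r) ⧸ (bbound d r).comap (bcycles d r).subtype

end CohomologyDefs

section InducedMaps

variable {C₁ C₂ : ℤ → Type}
  [∀ n, AddCommGroup (C₁ n)] [∀ n, Module κ (C₁ n)]
  [∀ n, AddCommGroup (C₂ n)] [∀ n, Module κ (C₂ n)]

open Classical in
/-- The map induced on cohomology by a linear map `g` from the degree-`a` part of the first
complex to the degree-`b` part of the second complex.  (If `g` is not compatible with the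
differentials, this is the junk value `0`.) -/
noncomputable def Hmap₂ (d₁ : ∀ n : ℤ, C₁ n →ₗ[κ] C₁ (n + 1)) (d₂ : ∀ n : ℤ, C₂ n →ₗ[κ] C₂ (n + 1))
    (a b : ℤ) (g : C₁ a →ₗ[κ] C₂ b) : cohomology d₁ a →ₗ[κ] cohomology d₂ b :=
  if h : cocycles d₁ a ≤ (cocycles d₂ b).comap g ∧ cobound d₁ a ≤ (cobound d₂ b).comap g then
    Submodule.mapQ _ _ (g.restrict fun x hx => h.1 hx)
      (fun x hx => by
        have hg : g ↑x ∈ cobound d₂ b := h.2 hx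
        simpa [Submodule.mem_comap, LinearMap.restrict_apply] using hg)
  else 0

open Classical in
/-- The map induced on homology by a linear map `g` from the degree-`a` part of the first
chain complex to the degree-`b` part of the second chain complex.  (Junk value `0` if `g` is
not compatible with the differentials.) -/
noncomputable def hMap₂ (d₁ : ∀ n : ℤ, C₁ n →ₗ[κ] C₁ (n - 1)) (d₂ : ∀ n : ℤ, C₂ n →ₗ[κ] C₂ (n - 1))
    (a b : ℤ) (g : C₁ a →ₗ[κ] C₂ b) : homologyC d₁ a →ₗ[κ] homologyC d₂ b :=
  if h : bcycles d₁ a ≤ (bcycles d₂ b).comap g ∧ bbound d₁ a ≤ (bbound d₂ b).comap g then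
    Submodule.mapQ _ _ (g.restrict fun x hx => h.1 hx)
      (fun x hx => by
        have hg : g ↑x ∈ bbound d₂ b := h.2 hx
        simpa [Submodule.mem_comap, LinearMap.restrict_apply] using hg)
  else 0

end InducedMaps

/-- A mixed complex over `κ`: non-negatively graded vector spaces with a degree `+1`
exterior differential `δ` and a degree `-1` interior differential `β` satisfying
`δδ = 0`, `ββ = 0` and `βδ + δβ = 0`. -/
structure Mixed (κ : Type) [Field κ] : Type 1 where
  C : ℤ → Type
  [acg : ∀ n, AddCommGroup (C n)]
  [mod : ∀ n, Module κ (C n)]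
  trivNeg : ∀ n : ℤ, n < 0 → Subsingleton (C n)
  δ : ∀ n : ℤ, C n →ₗ[κ] C (n + 1)
  β : ∀ n : ℤ, C n →ₗ[κ] C (n - 1)
  δδ : ∀ (n : ℤ) (x : C n), δ (n + 1) (δ n x) = 0
  ββ : ∀ (n : ℤ) (x : C n), β (n - 1) (β n x) = 0
  βδ : ∀ (n : ℤ) (x : C n),
    fcast (κ := κ) (show n + 1 - 1 = n by ring) (β (n + 1) (δ n x))
      + fcast (κ := κ) (show n - 1 + 1 = n by ring) (δ (n - 1) (β n x)) = 0

attribute [instance] Mixed.acg Mixed.mod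

/-- `^+C^r := ∏_{k ≥ 0} C^{r-2k}`. -/
abbrev plusC (M : Mixed κ) (r : ℤ) : Type := ∀ k : ℕ, M.C (r - 2 * (k : ℤ))

/-- `^-C^r := ∏_{k ≥ 0} C^{r+2k}`. -/
abbrev minusC (M : Mixed κ) (r : ℤ) : Type := ∀ k : ℕ, M.C (r + 2 * (k : ℤ))

/-- `𝕡C^r := ∏_{m ≡ r mod 2} C^m` (the components with `m < 0` are trivial). -/
abbrev pprodC (M : Mixed κ) (r : ℤ) : Type := ∀ n : {m : ℤ // m % 2 = r % 2}, M.C n.1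

/-- `PC^r := ⊕_{m ≡ r mod 2} C^m` (the components with `m < 0` are trivial). -/
abbrev pC (M : Mixed κ) (r : ℤ) : Type := ⨁ n : {m : ℤ // m % 2 = r % 2}, M.C n.1

/-- Components of the differential `^+D_β`. -/
def plusDComp (M : Mixed κ) (r : ℤ) : ∀ k : ℕ, plusC M r →ₗ[κ] M.C (r + 1 - 2 * (k : ℤ))
  | 0 =>
      (fcast (show r - 2 * ((0:ℕ) : ℤ) + 1 = r + 1 - 2 * ((0:ℕ) : ℤ) by push_cast; ring)).comp
        ((M.δ (r - 2 * ((0:ℕ) : ℤ))).comp (LinearMap.proj 0))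
  | (k + 1) =>
      (fcast (show r - 2 * ((k + 1 : ℕ) : ℤ) + 1 = r + 1 - 2 * ((k + 1 : ℕ) : ℤ) by push_cast; ring)).comp
        ((M.δ (r - 2 * ((k + 1 : ℕ) : ℤ))).comp (LinearMap.proj (k + 1)))
      + (fcast (show r - 2 * ((k : ℕ) : ℤ) - 1 = r + 1 - 2 * ((k + 1 : ℕ) : ℤ) by push_cast; ring)).comp
        ((M.β (r - 2 * ((k : ℕ) : ℤ))).comp (LinearMap.proj k))

/-- The differential of the cochain complex `^+C_β`. -/
def plusD (M : Mixed κ) (r : ℤ) : plusC M r →ₗ[κ] plusC M (r + 1) :=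
  LinearMap.pi (plusDComp M r)

/-- The differential of the chain complex `(^+C, ^+D^δ)`. -/
def plusDelta (M : Mixed κ) (r : ℤ) : plusC M r →ₗ[κ] plusC M (r - 1) :=
  LinearMap.pi fun k : ℕ =>
    (fcast (show r - 2 * ((k : ℕ) : ℤ) - 1 = r - 1 - 2 * ((k : ℕ) : ℤ) by ring)).comp
      ((M.β (r - 2 * ((k : ℕ) : ℤ))).comp (LinearMap.proj k))
    + (fcast (show r - 2 * ((k + 1 : ℕ) : ℤ) + 1 = r - 1 - 2 * ((k : ℕ) : ℤ) by push_cast; ring)).comp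
      ((M.δ (r - 2 * ((k + 1 : ℕ) : ℤ))).comp (LinearMap.proj (k + 1)))

/-- The differential of the cochain complex `^-C_β`. -/
def minusD (M : Mixed κ) (r : ℤ) : minusC M r →ₗ[κ] minusC M (r + 1) :=
  LinearMap.pi fun k : ℕ =>
    (fcast (show r + 2 * ((k + 1 : ℕ) : ℤ) - 1 = r + 1 + 2 * ((k : ℕ) : ℤ) by push_cast; ring)).comp
      ((M.β (r + 2 * ((k + 1 : ℕ) : ℤ))).comp (LinearMap.proj (k + 1)))
    + (fcast (show r + 2 * ((k : ℕ) : ℤ) + 1 = r + 1 + 2 * ((k : ℕ) : ℤ) by ring)).comp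
      ((M.δ (r + 2 * ((k : ℕ) : ℤ))).comp (LinearMap.proj k))

/-- The differential of the `2`-periodic cochain complex `𝕡C`. -/
def pprodD (M : Mixed κ) (r : ℤ) : pprodC M r →ₗ[κ] pprodC M (r + 1) :=
  LinearMap.pi fun n : {m : ℤ // m % 2 = (r + 1) % 2} =>
    (fcast (show n.1 - 1 + 1 = n.1 by ring)).comp
      ((M.δ (n.1 - 1)).comp
        (LinearMap.proj (⟨n.1 - 1, by have := n.2; omega⟩ : {m : ℤ // m % 2 = r % 2})))
    + (fcast (show n.1 + 1 - 1 = n.1 by ring)).comp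
      ((M.β (n.1 + 1)).comp
        (LinearMap.proj (⟨n.1 + 1, by have := n.2; omega⟩ : {m : ℤ // m % 2 = r % 2})))

/-- The differential of the `2`-periodic cochain complex `PC` (direct sum version). -/
noncomputable def pD (M : Mixed κ) (r : ℤ) : pC M r →ₗ[κ] pC M (r + 1) :=
  DirectSum.toModule κ {m : ℤ // m % 2 = r % 2} (pC M (r + 1)) fun n =>
    ((DirectSum.lof κ {m : ℤ // m % 2 = (r + 1) % 2} (fun m => M.C m.1)
        ⟨n.1 + 1, by have := n.2; omega⟩).comp (M.δ n.1))
    + ((DirectSum.lof κ {m : ℤ // m % 2 = (r + 1) % 2} (fun m => M.C m.1)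
        ⟨n.1 - 1, by have := n.2; omega⟩).comp (M.β n.1))

end CDGA

namespace CDGA

variable {κ : Type} [Field κ]

section MorphismInduced

variable {M₁ M₂ : Mixed κ}

/-- The map induced by a morphism of mixed complexes on `^+C`. -/
def plusMap (f : ∀ n : ℤ, M₁.C n →ₗ[κ] M₂.C n) (r : ℤ) : plusC M₁ r →ₗ[κ] plusC M₂ r :=
  LinearMap.pi fun k : ℕ => (f (r - 2 * (k : ℤ))).comp (LinearMap.proj k)

/-- The map induced by a morphism of mixed complexes on `^-C`. -/
def minusMap (f : ∀ n : ℤ, M₁.C n →ₗ[κ] M₂.C n) (r : ℤ) : minusC M₁ r →ₗ[κ] minusC M₂ r :=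
  LinearMap.pi fun k : ℕ => (f (r + 2 * (k : ℤ))).comp (LinearMap.proj k)

/-- The map induced by a morphism of mixed complexes on `𝕡C`. -/
def pprodMap (f : ∀ n : ℤ, M₁.C n →ₗ[κ] M₂.C n) (r : ℤ) : pprodC M₁ r →ₗ[κ] pprodC M₂ r :=
  LinearMap.pi fun n : {m : ℤ // m % 2 = r % 2} => (f n.1).comp (LinearMap.proj n)

/-- The map induced by a morphism of mixed complexes on `PC`. -/
noncomputable def pMap (f : ∀ n : ℤ, M₁.C n →ₗ[κ] M₂.C n) (r : ℤ) : pC M₁ r →ₗ[κ] pC M₂ r :=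
  DirectSum.toModule κ {m : ℤ // m % 2 = r % 2} (pC M₂ r) fun n =>
    (DirectSum.lof κ {m : ℤ // m % 2 = r % 2} (fun m => M₂.C m.1) n).comp (f n.1)

end MorphismInduced

/-- Components of the canonical inclusion `^+C^a → ^+C^{a+2} = ^+C^b`,
`(ω_a, ω_{a-2}, …) ↦ (0, ω_a, ω_{a-2}, …)`. -/
def inclS2Comp (M : Mixed κ) (a b : ℤ) (h : a + 2 = b) :
    ∀ k : ℕ, plusC M a →ₗ[κ] M.C (b - 2 * (k : ℤ))
  | 0 => 0
  | (j + 1) =>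
      (fcast (show a - 2 * ((j : ℕ) : ℤ) = b - 2 * ((j + 1 : ℕ) : ℤ) by push_cast; omega)).comp
        (LinearMap.proj j)

/-- The canonical inclusion `i : ^+C^a → ^+C^b` (for `b = a + 2`). -/
def inclS2 (M : Mixed κ) (a b : ℤ) (h : a + 2 = b) : plusC M a →ₗ[κ] plusC M b :=
  LinearMap.pi (inclS2Comp M a b h)

/-- The projection `π : ^+C^r → C^r` onto the top component. -/
def topProj (M : Mixed κ) (r : ℤ) : plusC M r →ₗ[κ] M.C r :=
  (fcast (show r - 2 * ((0:ℕ) : ℤ) = r by push_cast; ring)).comp (LinearMap.proj 0)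

/-- The canonical projection `^+C^a → ^+C^{a-2} = ^+C^b` dropping the top component. -/
def projS2 (M : Mixed κ) (a b : ℤ) (h : b + 2 = a) : plusC M a →ₗ[κ] plusC M b :=
  LinearMap.pi fun k : ℕ =>
    (fcast (show a - 2 * ((k + 1 : ℕ) : ℤ) = b - 2 * ((k : ℕ) : ℤ) by push_cast; omega)).comp
      (LinearMap.proj (k + 1))

/-- The canonical inclusion `I : ^+C^{r-2} → 𝕡C^r` (placing the component of
degree `r - 2 - 2j` in degree `r - 2 - 2j`). -/
def inclPprod (M : Mixed κ) (r : ℤ) : plusC M (r - 2) →ₗ[κ] pprodC M r :=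
  LinearMap.pi fun n : {m : ℤ // m % 2 = r % 2} =>
    if h : n.1 ≤ r - 2 then
      (fcast (show r - 2 - 2 * ((((r - 2 - n.1) / 2).toNat : ℕ) : ℤ) = n.1 by
          have := n.2; omega)).comp
        (LinearMap.proj (((r - 2 - n.1) / 2).toNat))
    else 0

/-- The canonical projection `p : 𝕡C^r → ^-C^r` onto the components of degree `≥ r`. -/
def projMinus (M : Mixed κ) (r : ℤ) : pprodC M r →ₗ[κ] minusC M r :=
  LinearMap.pi fun j : ℕ =>
    LinearMap.proj (⟨r + 2 * (j : ℤ), by omega⟩ : {m : ℤ // m % 2 = r % 2})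

/-- Reindexing (periodicity) isomorphism between the `2`-periodic complexes `PC^a` and
`PC^b` for `a ≡ b mod 2`. -/
noncomputable def reindexP (M : Mixed κ) (a b : ℤ) (h : a % 2 = b % 2) :
    pC M a →ₗ[κ] pC M b :=
  DirectSum.toModule κ {m : ℤ // m % 2 = a % 2} (pC M b) fun n =>
    DirectSum.lof κ {m : ℤ // m % 2 = b % 2} (fun m => M.C m.1) ⟨n.1, by have := n.2; omega⟩

/-- The canonical map `^+C^m → PC^m` (the components of negative degree are trivial and
are sent to `0`). -/
noncomputable def inclPlusP (M : Mixed κ) (m : ℤ) : plusC M m →ₗ[κ] pC M m :=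
  ∑ j ∈ Finset.range (m.toNat + 1),
    (DirectSum.lof κ {x : ℤ // x % 2 = m % 2} (fun x => M.C x.1)
        ⟨m - 2 * (j : ℤ), by omega⟩).comp
      (LinearMap.proj j)

section Psi

variable (M : Mixed κ) (Ψ : ℤ → ∀ n : ℤ, M.C n →ₗ[κ] M.C n)

/-- The endomorphism `^+Ψ_k` of `^+C^r`: the component of degree `r - 2j` is scaled
by `k^{-j}`. -/
noncomputable def plusPsi (k : ℤ) (r : ℤ) : plusC M r →ₗ[κ] plusC M r :=
  LinearMap.pi fun j : ℕ =>
    (((k : κ)⁻¹) ^ (j : ℕ)) • ((Ψ k (r - 2 * (j : ℤ))).comp (LinearMap.proj j))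

/-- The endomorphism `^-Ψ_k` of `^-C^r`: the component of degree `r + 2j` is scaled
by `k^j`. -/
noncomputable def minusPsi (k : ℤ) (r : ℤ) : minusC M r →ₗ[κ] minusC M r :=
  LinearMap.pi fun j : ℕ =>
    ((k : κ) ^ (j : ℕ)) • ((Ψ k (r + 2 * (j : ℤ))).comp (LinearMap.proj j))

/-- The endomorphism `𝕡Ψ_k` of `𝕡C^r`: the component of degree `r + 2j` (`j ∈ ℤ`) is
scaled by `k^j`. -/
noncomputable def pprodPsi (k : ℤ) (r : ℤ) : pprodC M r →ₗ[κ] pprodC M r :=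
  LinearMap.pi fun n : {m : ℤ // m % 2 = r % 2} =>
    ((k : κ) ^ ((n.1 - r) / 2)) • ((Ψ k n.1).comp (LinearMap.proj n))

end Psi

/-- The map `Φ((a_k)_k) = (a_k - S_k(a_{k+1}))_k` associated to an inverse system
of vector spaces; its kernel is `lim` and its cokernel is `lim¹`. -/
def phiMap {A : ℕ → Type} [∀ i, AddCommGroup (A i)] [∀ i, Module κ (A i)]
    (S : ∀ i : ℕ, A (i + 1) →ₗ[κ] A i) : (∀ i, A i) →ₗ[κ] (∀ i, A i) :=
  LinearMap.pi fun i : ℕ => LinearMap.proj i - (S i).comp (LinearMap.proj (i + 1))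

end CDGA

namespace CDGA

variable {κ : Type} [Field κ]

/-- The map `S : ^+H^{r+2k}_β → ^+H^{r+2(k+1)}_β` induced by the canonical inclusion
`^+C^{r+2k} ↪ ^+C^{r+2k+2}` placing a tuple into the lower components. -/
noncomputable def Smap (M : Mixed κ) (r : ℤ) (k : ℕ) :
    cohomology (plusD M) (r + 2 * (k : ℤ)) →ₗ[κ]
      cohomology (plusD M) (r + 2 * ((k + 1 : ℕ) : ℤ)) :=
  Hmap₂ (plusD M) (plusD M) (r + 2 * (k : ℤ)) (r + 2 * ((k + 1 : ℕ) : ℤ))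
    (inclS2 M (r + 2 * (k : ℤ)) (r + 2 * ((k + 1 : ℕ) : ℤ)) (by push_cast; ring))

/-- The canonical map `^+H^{r+2k}_β → PH^{r+2k} = PH^r` induced by the inclusion
`^+C^{r+2k} ⊆ PC^{r+2k} = PC^r`. -/
noncomputable def phiPH (M : Mixed κ) (r : ℤ) (k : ℕ) :
    cohomology (plusD M) (r + 2 * (k : ℤ)) →ₗ[κ] cohomology (pD M) r :=
  Hmap₂ (plusD M) (pD M) (r + 2 * (k : ℤ)) r
    ((reindexP M (r + 2 * (k : ℤ)) r (by omega)).comp (inclPlusP M (r + 2 * (k : ℤ))))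

/-- The canonical map `⊕_k ^+H^{r+2k}_β → PH^r`; the direct limit
`colim_k ^+H^{r+2k}_β` is the quotient of the source by the relations
`ι_k x - ι_{k+1} (S x)`, so the statement that the induced map on the direct limit is an
isomorphism says exactly that this map is surjective with kernel spanned by these
relations. -/
noncomputable def sigmaPH (M : Mixed κ) (r : ℤ) :
    (⨁ k : ℕ, cohomology (plusD M) (r + 2 * (k : ℤ))) →ₗ[κ] cohomology (pD M) r :=
  DirectSum.toModule κ ℕ (cohomology (pD M) r) (phiPH M r)

/-!
All the complexes involved embed into the single space `⨁ n, C^n` with the endomorphism `δ + β`: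
there the maps `S` and the inclusions `^+C^{r+2k} ⊆ PC^r` become identities between subspaces, and
being a cocycle or a coboundary is expressed by `δ + β` alone. An element of `PC^r` has only finitely
many nonzero components, so it lies in `^+C^{r+2k}` for all large `k`. Applied to a cocycle of `PC^r`
this gives surjectivity; applied to a primitive in `PC^{r-1}` of a cocycle of `^+C^{r+2k}` it shows
that every class dying in `PH^r` already dies at a finite stage.
-/

section SequentialColimit

variable {R : Type*} [Ring R] {A : ℕ → Type*} [∀ k, AddCommGroup (A k)] [∀ k, Module R (A k)]
  {B : Type*} [AddCommGroup B] [Module R B]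
  (S : ∀ k, A k →ₗ[R] A (k + 1)) {φ : ∀ k, A k →ₗ[R] B}

/-- The relations `ι_k x - ι_{k+1} (S x)`: the quotient of `⨁ k, A k` by this submodule is the
colimit of the sequence `A 0 → A 1 → A 2 → ⋯`. -/
def colimitRelations : Submodule R (⨁ k, A k) :=
  Submodule.span R {y | ∃ (k : ℕ) (x : A k),
    y = DirectSum.lof R ℕ A k x - DirectSum.lof R ℕ A (k + 1) (S k x)}

/-- The composite `A k → A (k + 1) → ⋯ → A (k + n)` of the maps of the sequence. -/
def transition (k : ℕ) : ∀ n : ℕ, A k →ₗ[R] A (k + n)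
  | 0 => LinearMap.id
  | n + 1 => (S (k + n)).comp (transition k n)

theorem lof_sub_lof_transition_mem (k n : ℕ) (x : A k) :
    DirectSum.lof R ℕ A k x - DirectSum.lof R ℕ A (k + n) (transition S k n x) ∈
      colimitRelations S := by
  induction n with
  | zero => exact (sub_self (DirectSum.lof R ℕ A k x)).symm ▸ zero_mem _
  | succ n ih =>
    rw [← sub_add_sub_cancel _ (DirectSum.lof R ℕ A (k + n) (transition S k n x))]
    exact add_mem ih (Submodule.subset_span ⟨k + n, transition S k n x, rfl⟩)

theorem eventually_exists_sub_lof_mem (y : ⨁ k, A k) :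
    ∀ᶠ l in Filter.atTop, ∃ x : A l, y - DirectSum.lof R ℕ A l x ∈ colimitRelations S := by
  induction y using DirectSum.induction_on with
  | zero => exact Filter.Eventually.of_forall fun l => ⟨0, by simp⟩
  | of k x =>
    filter_upwards [Filter.eventually_ge_atTop k] with l hkl
    obtain ⟨n, rfl⟩ := Nat.exists_eq_add_of_le hkl
    exact ⟨transition S k n x, lof_sub_lof_transition_mem S k n x⟩
  | add y z hy hz =>
    filter_upwards [hy, hz] with l ⟨u, hu⟩ ⟨v, hv⟩
    refine ⟨u + v, ?_⟩
    rw [map_add, add_sub_add_comm]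
    exact add_mem hu hv

variable {S}

theorem colimitRelations_le_ker_toModule (hφ : ∀ k x, φ (k + 1) (S k x) = φ k x) :
    colimitRelations S ≤ LinearMap.ker (DirectSum.toModule R ℕ B φ) := by
  refine Submodule.span_le.2 ?_
  rintro _ ⟨k, x, rfl⟩
  rw [SetLike.mem_coe, LinearMap.mem_ker, map_sub, DirectSum.toModule_lof, DirectSum.toModule_lof,
    hφ, sub_self]

theorem ker_toModule_eq_colimitRelations (hφ : ∀ k x, φ (k + 1) (S k x) = φ k x)
    (hker : ∀ k x, φ k x = 0 → ∃ n, transition S k n x = 0) :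
    LinearMap.ker (DirectSum.toModule R ℕ B φ) = colimitRelations S := by
  refine le_antisymm (fun y hy => ?_) (colimitRelations_le_ker_toModule hφ)
  obtain ⟨k, x, hyx⟩ := (eventually_exists_sub_lof_mem S y).exists
  have hx : φ k x = 0 := by
    have := colimitRelations_le_ker_toModule hφ hyx
    rwa [LinearMap.mem_ker, map_sub, LinearMap.mem_ker.1 hy, DirectSum.toModule_lof, zero_sub,
      neg_eq_zero] at this
  obtain ⟨n, hn⟩ := hker k x hx
  have hmem := lof_sub_lof_transition_mem S k n x
  rw [hn, map_zero, sub_zero] at hmem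
  exact (Submodule.sub_mem_iff_left _ hmem).1 hyx

theorem toModule_surjective (h : ∀ b, ∃ k x, φ k x = b) :
    Function.Surjective (DirectSum.toModule R ℕ B φ) := fun b => by
  obtain ⟨k, x, rfl⟩ := h b
  exact ⟨DirectSum.lof R ℕ A k x, DirectSum.toModule_lof R k x⟩

end SequentialColimit

theorem map_fcast {ι : Type} {C : ι → Type} [∀ i, AddCommGroup (C i)] [∀ i, Module κ (C i)]
    {A : Type*} [AddCommGroup A] [Module κ A] (f : ∀ i, C i →ₗ[κ] A) {m n : ι} (h : m = n)
    (x : C m) : f n (fcast (κ := κ) h x) = f m x := by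
  subst h; rfl

section CochainEmbedding

variable {C C₁ C₂ : ℤ → Type}
  [∀ n, AddCommGroup (C n)] [∀ n, Module κ (C n)]
  [∀ n, AddCommGroup (C₁ n)] [∀ n, Module κ (C₁ n)]
  [∀ n, AddCommGroup (C₂ n)] [∀ n, Module κ (C₂ n)]
  {A : Type*} [AddCommGroup A] [Module κ A] {D : A →ₗ[κ] A}
  {d : ∀ n : ℤ, C n →ₗ[κ] C (n + 1)}
  {d₁ : ∀ n : ℤ, C₁ n →ₗ[κ] C₁ (n + 1)} {d₂ : ∀ n : ℤ, C₂ n →ₗ[κ] C₂ (n + 1)}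

/-- A degreewise embedding of a cochain complex into an ungraded module `A` which turns the
differential into the endomorphism `D`. Comparing elements of different degrees, or of different
complexes, inside `A` avoids all casts between degrees. -/
structure CochainEmbedding (d : ∀ n : ℤ, C n →ₗ[κ] C (n + 1)) (D : A →ₗ[κ] A) where
  map : ∀ n : ℤ, C n →ₗ[κ] A
  injective : ∀ n, Function.Injective (map n)
  map_d : ∀ n x, map (n + 1) (d n x) = D (map n x)

namespace CochainEmbedding

theorem mem_cocycles_iff (J : CochainEmbedding d D) {n : ℤ} {x : C n} :
    x ∈ cocycles d n ↔ D (J.map n x) = 0 := by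
  rw [cocycles, LinearMap.mem_ker, ← J.map_d, map_eq_zero_iff _ (J.injective _)]

theorem mem_cobound_iff (J : CochainEmbedding d D) {n : ℤ} {x : C n} :
    x ∈ cobound d n ↔ ∃ y, D (J.map (n - 1) y) = J.map n x := by
  rw [cobound, LinearMap.mem_range]
  refine exists_congr fun y => ?_
  rw [LinearMap.comp_apply, ← (J.injective n).eq_iff, map_fcast J.map, J.map_d]

theorem cohomology_mk_eq_zero_iff (J : CochainEmbedding d D) {n : ℤ} (x : cocycles d n) :
    (Submodule.Quotient.mk x : cohomology d n) = 0 ↔ ∃ y, D (J.map (n - 1) y) = J.map n x := by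
  rw [← J.mem_cobound_iff, Submodule.Quotient.mk_eq_zero, Submodule.mem_comap,
    Submodule.subtype_apply]

theorem exists_Hmap₂_mk_eq (J₁ : CochainEmbedding d₁ D) (J₂ : CochainEmbedding d₂ D) {a b : ℤ}
    {g : C₁ a →ₗ[κ] C₂ b} (hg : ∀ x, J₂.map b (g x) = J₁.map a x)
    (hle : LinearMap.range (J₁.map (a - 1)) ≤ LinearMap.range (J₂.map (b - 1)))
    (x : cocycles d₁ a) :
    ∃ y : cocycles d₂ b, Hmap₂ d₁ d₂ a b g (Submodule.Quotient.mk x) = Submodule.Quotient.mk y ∧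
      J₂.map b y = J₁.map a x := by
  have hcocycles : cocycles d₁ a ≤ (cocycles d₂ b).comap g := fun x hx => by
    rw [Submodule.mem_comap, J₂.mem_cocycles_iff, hg]
    exact J₁.mem_cocycles_iff.1 hx
  have hcobound : cobound d₁ a ≤ (cobound d₂ b).comap g := fun x hx => by
    obtain ⟨y, hy⟩ := J₁.mem_cobound_iff.1 hx
    obtain ⟨z, hz⟩ := hle ⟨y, rfl⟩
    rw [Submodule.mem_comap, J₂.mem_cobound_iff, hg]
    exact ⟨z, by rw [hz, hy]⟩
  refine ⟨⟨g x, hcocycles x.2⟩, ?_, hg x⟩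
  rw [Hmap₂, dif_pos ⟨hcocycles, hcobound⟩]
  rfl

end CochainEmbedding

end CochainEmbedding

section Total

theorem toModule_lof_injective {R ι ι' : Type*} [Semiring R] [DecidableEq ι] [DecidableEq ι']
    {N : ι → Type*} [∀ i, AddCommMonoid (N i)] [∀ i, Module R (N i)] {f : ι' → ι}
    (hf : Function.Injective f) :
    Function.Injective (DirectSum.toModule R ι' (⨁ i, N i) fun j => DirectSum.lof R ι N (f j)) := by
  let restrict : (⨁ i, N i) → ⨁ j, N (f j) := DFinsupp.comapDomain f hf
  refine Function.LeftInverse.injective (g := restrict) fun x => ?_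
  induction x using DirectSum.induction_on with
  | zero => rw [map_zero]; exact DFinsupp.comapDomain_zero f hf
  | of j v =>
    rw [← DirectSum.lof_eq_of R, DirectSum.toModule_lof]
    exact DFinsupp.comapDomain_single f hf j v
  | add x y hx hy =>
    rw [map_add]
    exact (DFinsupp.comapDomain_add f hf _ _).trans (congrArg₂ (· + ·) hx hy)

variable (M : Mixed κ)

/-- The total space `⨁ n, C^n` of a mixed complex, containing all `^+C^r` and `PC^r`. -/
abbrev Total : Type := ⨁ n : ℤ, M.C n

/-- The endomorphism `δ + β` of the total space. -/
noncomputable def totalD : Total M →ₗ[κ] Total M :=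
  DirectSum.toModule κ ℤ (Total M) fun n =>
    (DirectSum.lof κ ℤ M.C (n + 1)).comp (M.δ n) + (DirectSum.lof κ ℤ M.C (n - 1)).comp (M.β n)

theorem totalD_lof (n : ℤ) (x : M.C n) :
    totalD M (DirectSum.lof κ ℤ M.C n x) =
      DirectSum.lof κ ℤ M.C (n + 1) (M.δ n x) + DirectSum.lof κ ℤ M.C (n - 1) (M.β n x) :=
  DirectSum.toModule_lof κ n x

/-- The inclusion of `PC^r` into the total space. -/
noncomputable def pToTotal (r : ℤ) : pC M r →ₗ[κ] Total M :=
  DirectSum.toModule κ {m : ℤ // m % 2 = r % 2} (Total M) fun n => DirectSum.lof κ ℤ M.C n.1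

theorem pToTotal_lof (r : ℤ) (n : {m : ℤ // m % 2 = r % 2}) (x : M.C n.1) :
    pToTotal M r (DirectSum.lof κ {m : ℤ // m % 2 = r % 2} (fun m => M.C m.1) n x) =
      DirectSum.lof κ ℤ M.C n.1 x := by
  rw [pToTotal, DirectSum.toModule_lof]

theorem pToTotal_pD (r : ℤ) (x : pC M r) :
    pToTotal M (r + 1) (pD M r x) = totalD M (pToTotal M r x) := by
  suffices (pToTotal M (r + 1)).comp (pD M r) = (totalD M).comp (pToTotal M r) from
    LinearMap.congr_fun this x
  refine DirectSum.linearMap_ext κ fun n => LinearMap.ext fun v => ?_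
  simp only [LinearMap.comp_apply, pD, DirectSum.toModule_lof, LinearMap.add_apply, map_add]
  rw [pToTotal_lof, pToTotal_lof, pToTotal_lof, totalD_lof]

theorem pToTotal_reindexP {a b : ℤ} (h : a % 2 = b % 2) (x : pC M a) :
    pToTotal M b (reindexP M a b h x) = pToTotal M a x := by
  suffices (pToTotal M b).comp (reindexP M a b h) = pToTotal M a from LinearMap.congr_fun this x
  refine DirectSum.linearMap_ext κ fun n => LinearMap.ext fun v => ?_
  simp only [LinearMap.comp_apply]
  rw [reindexP, DirectSum.toModule_lof, pToTotal_lof, pToTotal_lof]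

/-- The inclusion of `PC` into the total space as a cochain embedding. -/
noncomputable def pEmbedding : CochainEmbedding (pD M) (totalD M) where
  map := pToTotal M
  injective _ := toModule_lof_injective Subtype.val_injective
  map_d := pToTotal_pD M

/-- The inclusion of `^+C^m` into the total space, through `PC^m`. -/
noncomputable def plusToTotal (m : ℤ) : plusC M m →ₗ[κ] Total M :=
  (pToTotal M m).comp (inclPlusP M m)

theorem lof_eq_zero_of_neg {n : ℤ} (hn : n < 0) (x : M.C n) : DirectSum.lof κ ℤ M.C n x = 0 := by
  have := M.trivNeg n hn
  rw [Subsingleton.elim x 0, map_zero]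

theorem plusToTotal_eq_sum {m : ℤ} {N : ℕ} (hN : m.toNat < N) (x : plusC M m) :
    plusToTotal M m x =
      ∑ j ∈ Finset.range N, DirectSum.lof κ ℤ M.C (m - 2 * (j : ℤ)) (x j) := by
  have hsum : plusToTotal M m x =
      ∑ j ∈ Finset.range (m.toNat + 1), DirectSum.lof κ ℤ M.C (m - 2 * (j : ℤ)) (x j) := by
    simp only [plusToTotal, inclPlusP, LinearMap.comp_apply, LinearMap.sum_apply, map_sum]
    refine Finset.sum_congr rfl fun j _ => ?_
    rw [pToTotal_lof, LinearMap.proj_apply]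
  rw [hsum]
  refine Finset.sum_subset (Finset.range_subset_range.2 hN) fun j _ hj => ?_
  rw [Finset.mem_range] at hj
  exact lof_eq_zero_of_neg M (by omega) _

theorem plusToTotal_apply (m : ℤ) (x : plusC M m) (k : ℕ) :
    plusToTotal M m x (m - 2 * (k : ℤ)) = x k := by
  rw [plusToTotal_eq_sum M (show m.toNat < m.toNat + k + 1 by omega), DFinsupp.finsetSum_apply,
    Finset.sum_eq_single_of_mem k (Finset.mem_range.2 (by omega))]
  · exact DirectSum.lof_apply κ _ _
  · exact fun j _ hj => DirectSum.of_eq_of_ne _ _ _ (by omega)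

theorem plusToTotal_injective (m : ℤ) : Function.Injective (plusToTotal M m) := fun x y h =>
  funext fun k => by rw [← plusToTotal_apply M m x, h, plusToTotal_apply]

theorem plusToTotal_single (m : ℤ) (j : ℕ) (v : M.C (m - 2 * (j : ℤ))) :
    plusToTotal M m (Pi.single j v) = DirectSum.lof κ ℤ M.C (m - 2 * (j : ℤ)) v := by
  rw [plusToTotal_eq_sum M (show m.toNat < m.toNat + j + 1 by omega),
    Finset.sum_eq_single_of_mem j (Finset.mem_range.2 (by omega)), Pi.single_eq_same]
  intro i _ hi
  rw [Pi.single_eq_of_ne hi, map_zero]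

theorem lof_plusD_zero (m : ℤ) (x : plusC M m) :
    DirectSum.lof κ ℤ M.C (m + 1 - 2 * ((0 : ℕ) : ℤ)) (plusD M m x 0) =
      DirectSum.lof κ ℤ M.C (m - 2 * ((0 : ℕ) : ℤ) + 1) (M.δ _ (x 0)) :=
  map_fcast (DirectSum.lof κ ℤ M.C) _ _

theorem lof_plusD_succ (m : ℤ) (x : plusC M m) (k : ℕ) :
    DirectSum.lof κ ℤ M.C (m + 1 - 2 * ((k + 1 : ℕ) : ℤ)) (plusD M m x (k + 1)) =
      DirectSum.lof κ ℤ M.C (m - 2 * ((k + 1 : ℕ) : ℤ) + 1) (M.δ _ (x (k + 1))) +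
        DirectSum.lof κ ℤ M.C (m - 2 * (k : ℤ) - 1) (M.β _ (x k)) :=
  (map_add _ _ _).trans (congrArg₂ _ (map_fcast (DirectSum.lof κ ℤ M.C) _ _)
    (map_fcast (DirectSum.lof κ ℤ M.C) _ _))

theorem plusToTotal_plusD (m : ℤ) (x : plusC M m) :
    plusToTotal M (m + 1) (plusD M m x) = totalD M (plusToTotal M m x) := by
  let N := m.toNat + 2
  have hδ_top : DirectSum.lof κ ℤ M.C (m - 2 * (N : ℤ) + 1) (M.δ _ (x N)) = 0 :=
    lof_eq_zero_of_neg M (by omega) _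
  calc plusToTotal M (m + 1) (plusD M m x)
    _ = ∑ j ∈ Finset.range (N + 1),
          DirectSum.lof κ ℤ M.C (m - 2 * (j : ℤ) + 1) (M.δ _ (x j)) +
        ∑ j ∈ Finset.range N, DirectSum.lof κ ℤ M.C (m - 2 * (j : ℤ) - 1) (M.β _ (x j)) := by
      rw [plusToTotal_eq_sum M (show (m + 1).toNat < N + 1 by omega), Finset.sum_range_succ',
        lof_plusD_zero]
      simp only [lof_plusD_succ, Finset.sum_add_distrib]
      rw [Finset.sum_range_succ' _ N, add_right_comm]
    _ = totalD M (plusToTotal M m x) := by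
      rw [Finset.sum_range_succ, hδ_top, add_zero, ← Finset.sum_add_distrib,
        plusToTotal_eq_sum M (show m.toNat < N by omega), map_sum]
      simp only [totalD_lof]

theorem plusToTotal_inclS2 {a b : ℤ} (h : a + 2 = b) (x : plusC M a) :
    plusToTotal M b (inclS2 M a b h x) = plusToTotal M a x := by
  have hzero : inclS2 M a b h x 0 = 0 := rfl
  have hsucc (j : ℕ) :
      DirectSum.lof κ ℤ M.C (b - 2 * ((j + 1 : ℕ) : ℤ)) (inclS2 M a b h x (j + 1)) =
        DirectSum.lof κ ℤ M.C (a - 2 * (j : ℤ)) (x j) :=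
    map_fcast (DirectSum.lof κ ℤ M.C) _ _
  rw [plusToTotal_eq_sum M (show a.toNat < a.toNat + 2 by omega),
    plusToTotal_eq_sum M (show b.toNat < a.toNat + 2 + 1 by omega), Finset.sum_range_succ', hzero,
    map_zero, add_zero]
  exact Finset.sum_congr rfl fun j _ => hsucc j

/-- The inclusion of `^+C_β` into the total space as a cochain embedding. -/
noncomputable def plusEmbedding : CochainEmbedding (plusD M) (totalD M) where
  map := plusToTotal M
  injective := plusToTotal_injective M
  map_d := plusToTotal_plusD M

theorem eventually_pToTotal_mem_range_plusToTotal (r : ℤ) (x : pC M r) :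
    ∀ᶠ m in Filter.atTop, m % 2 = r % 2 → pToTotal M r x ∈ LinearMap.range (plusToTotal M m) := by
  induction x using DirectSum.induction_on with
  | zero => exact Filter.Eventually.of_forall fun m _ => (map_zero (pToTotal M r)).symm ▸ zero_mem _
  | of n v =>
    filter_upwards [Filter.eventually_ge_atTop n.1] with m hnm hmr
    have hn : n.1 = m - 2 * (((m - n.1) / 2).toNat : ℤ) := by have := n.2; omega
    refine ⟨Pi.single _ (fcast (κ := κ) hn v), ?_⟩
    rw [plusToTotal_single, map_fcast (DirectSum.lof κ ℤ M.C)]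
    exact (pToTotal_lof M r n v).symm
  | add x y hx hy =>
    filter_upwards [hx, hy] with m hx hy hmr
    rw [map_add]
    exact add_mem (hx hmr) (hy hmr)

end Total

section Cohomology

variable (M : Mixed κ) (r : ℤ)

theorem exists_Smap_mk_eq (k : ℕ) (x : cocycles (plusD M) (r + 2 * (k : ℤ))) :
    ∃ y : cocycles (plusD M) (r + 2 * ((k + 1 : ℕ) : ℤ)),
      Smap M r k (Submodule.Quotient.mk x) = Submodule.Quotient.mk y ∧
        plusToTotal M _ y.1 = plusToTotal M _ x.1 := by
  refine (plusEmbedding M).exists_Hmap₂_mk_eq (plusEmbedding M) (plusToTotal_inclS2 M _) ?_ x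
  rintro _ ⟨y, rfl⟩
  exact ⟨_, plusToTotal_inclS2 M (by push_cast; ring) y⟩

theorem exists_transition_Smap_mk_eq (k n : ℕ) (x : cocycles (plusD M) (r + 2 * (k : ℤ))) :
    ∃ y : cocycles (plusD M) (r + 2 * ((k + n : ℕ) : ℤ)),
      transition (Smap M r) k n (Submodule.Quotient.mk x) = Submodule.Quotient.mk y ∧
        plusToTotal M _ y.1 = plusToTotal M _ x.1 := by
  induction n with
  | zero => exact ⟨x, rfl, rfl⟩
  | succ n ih =>
    obtain ⟨y, hy, hyx⟩ := ih
    obtain ⟨z, hz, hzy⟩ := exists_Smap_mk_eq M r (k + n) y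
    exact ⟨z, (congrArg (Smap M r (k + n)) hy).trans hz, hzy.trans hyx⟩

theorem exists_phiPH_mk_eq (k : ℕ) (x : cocycles (plusD M) (r + 2 * (k : ℤ))) :
    ∃ y : cocycles (pD M) r, phiPH M r k (Submodule.Quotient.mk x) = Submodule.Quotient.mk y ∧
      pToTotal M r y.1 = plusToTotal M _ x.1 := by
  refine (plusEmbedding M).exists_Hmap₂_mk_eq (pEmbedding M)
    (fun x => pToTotal_reindexP M (by omega) (inclPlusP M _ x)) ?_ x
  rintro _ ⟨y, rfl⟩
  exact ⟨_, pToTotal_reindexP M (by omega) (inclPlusP M _ y)⟩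

theorem phiPH_Smap (k : ℕ) (x : cohomology (plusD M) (r + 2 * (k : ℤ))) :
    phiPH M r (k + 1) (Smap M r k x) = phiPH M r k x := by
  obtain ⟨x, rfl⟩ := Submodule.Quotient.mk_surjective _ x
  obtain ⟨y, hy, hyx⟩ := exists_Smap_mk_eq M r k x
  obtain ⟨u, hu, hux⟩ := exists_phiPH_mk_eq M r k x
  obtain ⟨v, hv, hvy⟩ := exists_phiPH_mk_eq M r (k + 1) y
  have huv : v = u := Subtype.ext ((pEmbedding M).injective r (hvy.trans (hyx.trans hux.symm)))
  rw [hy, hv, hu, huv]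

theorem exists_phiPH_eq (z : cohomology (pD M) r) : ∃ k x, phiPH M r k x = z := by
  obtain ⟨z, rfl⟩ := Submodule.Quotient.mk_surjective _ z
  obtain ⟨m₀, hm₀⟩ := Filter.eventually_atTop.1 (eventually_pToTotal_mem_range_plusToTotal M r z.1)
  let k := (m₀ - r).toNat
  obtain ⟨x, hxz⟩ := hm₀ (r + 2 * (k : ℤ)) (by omega) (by omega)
  have hx : x ∈ cocycles (plusD M) (r + 2 * (k : ℤ)) := by
    refine (plusEmbedding M).mem_cocycles_iff.2 ?_
    exact (congrArg (totalD M) hxz).trans ((pEmbedding M).mem_cocycles_iff.1 z.2)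
  obtain ⟨y, hy, hyx⟩ := exists_phiPH_mk_eq M r k ⟨x, hx⟩
  have hyz : y = z := Subtype.ext ((pEmbedding M).injective r (hyx.trans hxz))
  exact ⟨k, Submodule.Quotient.mk ⟨x, hx⟩, by rw [hy, hyz]⟩

theorem exists_transition_Smap_eq_zero (k : ℕ) (x : cohomology (plusD M) (r + 2 * (k : ℤ)))
    (hx : phiPH M r k x = 0) : ∃ n, transition (Smap M r) k n x = 0 := by
  obtain ⟨x, rfl⟩ := Submodule.Quotient.mk_surjective _ x
  obtain ⟨y, hy, hyx⟩ := exists_phiPH_mk_eq M r k x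
  obtain ⟨b, hb⟩ := ((pEmbedding M).cohomology_mk_eq_zero_iff y).1 (hy.symm.trans hx)
  obtain ⟨m₀, hm₀⟩ := Filter.eventually_atTop.1
    (eventually_pToTotal_mem_range_plusToTotal M (r - 1) b)
  let n := (m₀ - r + 1).toNat
  obtain ⟨w, hw⟩ := hm₀ (r + 2 * ((k + n : ℕ) : ℤ) - 1) (by omega) (by omega)
  obtain ⟨x', hx', hx'x⟩ := exists_transition_Smap_mk_eq M r k n x
  refine ⟨n, hx'.trans (((plusEmbedding M).cohomology_mk_eq_zero_iff x').2 ⟨w, ?_⟩)⟩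
  calc totalD M (plusToTotal M (r + 2 * ((k + n : ℕ) : ℤ) - 1) w)
    _ = totalD M (pToTotal M (r - 1) b) := by rw [hw]
    _ = pToTotal M r y.1 := hb
    _ = plusToTotal M (r + 2 * (k : ℤ)) x.1 := hyx
    _ = plusToTotal M (r + 2 * ((k + n : ℕ) : ℤ)) x'.1 := hx'x.symm

end Cohomology

theorem statement0_general (κ : Type) [Field κ] (M : Mixed κ) (r : ℤ) :
    Function.Surjective (sigmaPH M r) ∧
      LinearMap.ker (sigmaPH M r) = colimitRelations (Smap M r) :=
  ⟨toModule_surjective (exists_phiPH_eq M r),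
    ker_toModule_eq_colimitRelations (phiPH_Smap M r) (exists_transition_Smap_eq_zero M r)⟩

/-- for `r ≥ 0`, the canonical map
`colim_k ^+H^{r+2k}_β → PH^r` is an isomorphism of `κ`-vector spaces; equivalently, the
canonical map `⊕_k ^+H^{r+2k}_β → PH^r` is surjective and its kernel is exactly the
submodule of relations defining the direct limit. -/
theorem statement0 (κ : Type) [Field κ] (M : Mixed κ) (r : ℤ) (hr : 0 ≤ r) :
    Function.Surjective (sigmaPH M r) ∧
    LinearMap.ker (sigmaPH M r) =
      Submodule.span κ
        {y : ⨁ k : ℕ, cohomology (plusD M) (r + 2 * (k : ℤ)) |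
          ∃ (k : ℕ) (x : cohomology (plusD M) (r + 2 * (k : ℤ))),
            y = DirectSum.lof κ ℕ (fun k : ℕ => cohomology (plusD M) (r + 2 * (k : ℤ))) k x
              - DirectSum.lof κ ℕ (fun k : ℕ => cohomology (plusD M) (r + 2 * (k : ℤ)))
                  (k + 1) (Smap M r k x)} :=
  statement0_general κ M r

end CDGA
end

section
/- Let (C, δ, β) be a mixed complex over κ. For every integer r, consider the inverse system A_k := ^+H^δ_{r+2k} (k ≥ 0) with structure maps S : A_{k+1} → A_k induced by the projections ^+C^* → ^+C^{*−2} dropping the top component. Define Φ : ∏_k A_k → ∏_k A_k by Φ((a_k)) = (a_k − S(a_{k+1})), and set lim := ker Φ and lim¹ := coker Φ. Then there is a short exact sequence of κ-vector spaces 0 → lim¹_k ^+H^δ_{r−1+2k} → 𝕡H^r → lim_k ^+H^δ_{r+2k} → 0. -/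
open LinearMap DirectSum

namespace CDGA

variable {κ : Type} [Field κ]

/-- The structure map `S : ^+H^δ_{a} → ^+H^δ_{a-2} = ^+H^δ_{b}` of the inverse system,
induced by the projection `^+C^a → ^+C^{a-2}` dropping the top component. -/
noncomputable def SmapDelta (M : Mixed κ) (a b : ℤ) (h : b + 2 = a) :
    homologyC (plusDelta M) a →ₗ[κ] homologyC (plusDelta M) b :=
  hMap₂ (plusDelta M) (plusDelta M) a b (projS2 M a b h)

/-- The map `Φ` of the inverse system `A_k = ^+H^δ_{s+2k}` with structure maps induced by
the projections; `lim = ker Φ`, `lim¹ = coker Φ`. -/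
noncomputable def phiDelta (M : Mixed κ) (s : ℤ) :
    (∀ k : ℕ, homologyC (plusDelta M) (s + 2 * (k : ℤ))) →ₗ[κ]
      (∀ k : ℕ, homologyC (plusDelta M) (s + 2 * (k : ℤ))) :=
  phiMap (A := fun k : ℕ => homologyC (plusDelta M) (s + 2 * (k : ℤ)))
    (fun k : ℕ =>
      SmapDelta M (s + 2 * ((k + 1 : ℕ) : ℤ)) (s + 2 * (k : ℤ)) (by push_cast; ring))

/-!
Dropping top components is surjective, so `Φ` is surjective on the chains `∏_k ^+C^{a+2k}`, and its
kernel there is `𝕡C^s` for `s ≡ a mod 2`. On cycles, the kernel of `Φ` is the space of cocycles of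
`𝕡C^s`. The differentials therefore map the short exact row

  `0 → 𝕡C^{r-1} → ∏_k ^+C^{r-1+2k} → ∏_k ^+C^{r-1+2k} → 0`

to the row `0 → Z(𝕡C^r) → ∏_k Z_{r-2+2k} → ∏_k Z_{r-2+2k}`, and the cokernels of the three vertical
maps are `𝕡H^r` and twice `∏_k ^+H^δ_{r-2+2k}`. The snake lemma provides a connecting map from
`∏_k Z_{r-1+2k}` to `𝕡H^r` whose kernel is the image of `Φ` on cycles and whose image is the kernel
of `𝕡H^r → ∏_k ^+H^δ_{r-2+2k}`; because `Φ` is surjective on chains, the connecting map induces an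
injection of `lim¹`. The same surjectivity makes the sequence of cokernels exact in the middle,
which identifies the image of `𝕡H^r` with `lim`.
-/

section ExactSequences

variable {R : Type*} [Ring R]

theorem exact_piMap {ι : Type*} {A B C : ι → Type*}
    [∀ i, AddCommGroup (A i)] [∀ i, Module R (A i)]
    [∀ i, AddCommGroup (B i)] [∀ i, Module R (B i)]
    [∀ i, AddCommGroup (C i)] [∀ i, Module R (C i)]
    {f : ∀ i, A i →ₗ[R] B i} {g : ∀ i, B i →ₗ[R] C i}
    (hfg : ∀ i, Function.Exact (f i) (g i)) :
    Function.Exact (LinearMap.piMap f) (LinearMap.piMap g) := by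
  intro y
  rw [LinearMap.coe_piMap, LinearMap.coe_piMap, Set.range_piMap]
  simp only [funext_iff, Pi.map_apply, Pi.zero_apply, hfg _ _, Set.mem_pi, Set.mem_univ,
    true_imp_iff]

theorem exists_injective_comp_eq {A B W : Type*} [AddCommGroup A] [Module R A]
    [AddCommGroup B] [Module R B] [AddCommGroup W] [Module R W]
    {p : W →ₗ[R] A} {q : W →ₗ[R] B} (hp : Function.Surjective p) (h : ker p = ker q) :
    ∃ f : A →ₗ[R] B, Function.Injective f ∧ f ∘ₗ p = q := by
  refine ⟨(ker p).liftQ q h.le ∘ₗ (p.quotKerEquivOfSurjective hp).symm, ?_, ?_⟩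
  · rw [LinearMap.coe_comp]
    exact (ker_eq_bot.1 (Submodule.ker_liftQ_eq_bot' _ _ h)).comp
      (p.quotKerEquivOfSurjective hp).symm.injective
  · ext w
    exact congrArg ((ker p).liftQ q h.le) (p.quotKerEquivOfSurjective_symm_apply hp w)

variable {M₂ M₃ N₁ N₂ N₃ C₁ C₂ C₃ : Type*}
  [AddCommGroup M₂] [Module R M₂] [AddCommGroup M₃] [Module R M₃]
  [AddCommGroup N₁] [Module R N₁] [AddCommGroup N₂] [Module R N₂] [AddCommGroup N₃] [Module R N₃]
  [AddCommGroup C₁] [Module R C₁] [AddCommGroup C₂] [Module R C₂] [AddCommGroup C₃] [Module R C₃]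
  {i₂ : M₂ →ₗ[R] N₂} {i₃ : M₃ →ₗ[R] N₃} {f₂ : M₂ →ₗ[R] M₃}
  {g₁ : N₁ →ₗ[R] N₂} {g₂ : N₂ →ₗ[R] N₃}
  {π₁ : N₁ →ₗ[R] C₁} {π₂ : N₂ →ₗ[R] C₂} {π₃ : N₃ →ₗ[R] C₃}
  {G₁ : C₁ →ₗ[R] C₂} {G₂ : C₂ →ₗ[R] C₃}

theorem exact_cokernels (hf₂ : Function.Surjective f₂) (hg : Function.Exact g₁ g₂)
    (hi : g₂ ∘ₗ i₂ = i₃ ∘ₗ f₂) (h₂ : Function.Exact i₂ π₂) (h₃ : Function.Exact i₃ π₃)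
    (hπ₁ : Function.Surjective π₁) (hπ₂ : Function.Surjective π₂)
    (hG₁ : G₁ ∘ₗ π₁ = π₂ ∘ₗ g₁) (hG₂ : G₂ ∘ₗ π₂ = π₃ ∘ₗ g₂) :
    Function.Exact G₁ G₂ := by
  simp only [LinearMap.ext_iff, LinearMap.comp_apply] at hi hG₁ hG₂
  intro c
  constructor
  · intro hc
    obtain ⟨y, rfl⟩ := hπ₂ c
    obtain ⟨m, hm⟩ := (h₃ (g₂ y)).1 (by rw [← hG₂, hc])
    obtain ⟨l, rfl⟩ := hf₂ m
    obtain ⟨n, hn⟩ := (hg (y - i₂ l)).1 (by rw [map_sub, hi, hm, sub_self])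
    exact ⟨π₁ n, by rw [hG₁, hn, map_sub, h₂.apply_apply_eq_zero, sub_zero]⟩
  · rintro ⟨b, rfl⟩
    obtain ⟨n, rfl⟩ := hπ₁ b
    rw [hG₁, hG₂, hg.apply_apply_eq_zero, map_zero]

theorem mem_range_cokernelMap_iff (hf₂ : Function.Surjective f₂)
    (hi : g₂ ∘ₗ i₂ = i₃ ∘ₗ f₂) (h₃ : Function.Exact i₃ π₃) (hπ₂ : Function.Surjective π₂)
    (hG₂ : G₂ ∘ₗ π₂ = π₃ ∘ₗ g₂) (z : N₃) :
    π₃ z ∈ range G₂ ↔ z ∈ range g₂ := by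
  simp only [LinearMap.ext_iff, LinearMap.comp_apply] at hi hG₂
  constructor
  · rintro ⟨c, hc⟩
    obtain ⟨y, rfl⟩ := hπ₂ c
    obtain ⟨m, hm⟩ := (h₃ (z - g₂ y)).1 (by rw [map_sub, ← hG₂, hc, sub_self])
    obtain ⟨l, rfl⟩ := hf₂ m
    exact ⟨i₂ l + y, by rw [map_add, hi, hm, sub_add_cancel]⟩
  · rintro ⟨y, rfl⟩
    exact ⟨π₂ y, hG₂ y⟩

end ExactSequences

section InverseSystems

variable {A B : ℕ → Type} [∀ i, AddCommGroup (A i)] [∀ i, Module κ (A i)]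
  [∀ i, AddCommGroup (B i)] [∀ i, Module κ (B i)]
  {S : ∀ i, A (i + 1) →ₗ[κ] A i} {T : ∀ i, B (i + 1) →ₗ[κ] B i}

theorem phiMap_apply (x : ∀ i, A i) (i : ℕ) : phiMap S x i = x i - S i (x (i + 1)) :=
  rfl

theorem phiMap_eq_zero_iff {x : ∀ i, A i} : phiMap S x = 0 ↔ ∀ i, S i (x (i + 1)) = x i := by
  rw [funext_iff]
  exact forall_congr' fun i => by rw [phiMap_apply, Pi.zero_apply, sub_eq_zero, eq_comm]

theorem phiMap_surjective (hS : ∀ i, Function.Surjective (S i)) :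
    Function.Surjective (phiMap S) := by
  intro z
  choose L hL using hS
  refine ⟨fun i => Nat.rec 0 (fun j w => L j (w - z j)) i, funext fun i => ?_⟩
  rw [phiMap_apply, hL, sub_sub_cancel]

theorem phiMap_comp_piMap {f : ∀ i, A i →ₗ[κ] B i}
    (hf : ∀ i, T i ∘ₗ f (i + 1) = f i ∘ₗ S i) :
    phiMap T ∘ₗ LinearMap.piMap f = LinearMap.piMap f ∘ₗ phiMap S := by
  refine LinearMap.ext fun x => funext fun i => ?_
  change f i (x i) - T i (f (i + 1) (x (i + 1))) = f i (x i - S i (x (i + 1)))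
  rw [map_sub, ← LinearMap.comp_apply (T i), hf, LinearMap.comp_apply]

end InverseSystems

section IndexCasts

theorem fcast_fcast {ι : Type} {C : ι → Type} [∀ i, AddCommGroup (C i)] [∀ i, Module κ (C i)]
    {l m n : ι} (h : l = m) (h' : m = n) (x : C l) :
    fcast (κ := κ) h' (fcast (κ := κ) h x) = fcast (κ := κ) (h.trans h') x := by
  subst h h'
  rfl

variable {M : Mixed κ}

theorem δ_fcast {m n : ℤ} (h : m = n) (x : M.C m) :
    M.δ n (fcast (κ := κ) h x) = fcast (κ := κ) (congrArg (· + 1) h) (M.δ m x) := by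
  subst h
  rfl

theorem β_fcast {m n : ℤ} (h : m = n) (x : M.C m) :
    M.β n (fcast (κ := κ) h x) = fcast (κ := κ) (congrArg (· - 1) h) (M.β m x) := by
  subst h
  rfl

theorem fcast_pprodC {s : ℤ} (x : pprodC M s) {m n : ℤ} (h : m = n) (hm : m % 2 = s % 2) :
    fcast (κ := κ) (C := M.C) h (x ⟨m, hm⟩) = x ⟨n, h ▸ hm⟩ := by
  subst h
  rfl

theorem fcast_β_fcast_δ_add_fcast_δ_fcast_β {m n p q : ℤ} (hp : m + 1 = p) (hpn : p - 1 = n)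
    (hq : m - 1 = q) (hqn : q + 1 = n) (x : M.C m) :
    fcast (κ := κ) hpn (M.β p (fcast (κ := κ) hp (M.δ m x)))
      + fcast (κ := κ) hqn (M.δ q (fcast (κ := κ) hq (M.β m x))) = 0 := by
  obtain rfl : m = n := by omega
  subst hp hq
  exact M.βδ m x

end IndexCasts

section Differentials

variable (M : Mixed κ)

/-- The differential `^+C^a → ^+C^b` of the chain complex `(^+C, ^+D^δ)`, where `b` is any index
equal to `a - 1`. -/
def plusDiff {a b : ℤ} (h : a - 1 = b) : plusC M a →ₗ[κ] plusC M b :=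
  fcast h ∘ₗ plusDelta M a

/-- The differential `𝕡C^s → 𝕡C^t` of the `2`-periodic complex, where `t` is any index equal to
`s + 1`. -/
def pprodDiff {s t : ℤ} (h : s + 1 = t) : pprodC M s →ₗ[κ] pprodC M t :=
  fcast h ∘ₗ pprodD M s

variable {M}

theorem plusDiff_apply {a b : ℤ} (h : a - 1 = b) (x : plusC M a) (k : ℕ) :
    plusDiff M h x k =
      fcast (κ := κ) (C := M.C) (show a - 2 * (k : ℤ) - 1 = b - 2 * (k : ℤ) by omega)
        (M.β _ (x k))
      + fcast (κ := κ) (C := M.C)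
        (show a - 2 * ((k + 1 : ℕ) : ℤ) + 1 = b - 2 * (k : ℤ) by push_cast; omega)
        (M.δ _ (x (k + 1))) := by
  subst h
  rfl

theorem mem_bcycles_iff {a b : ℤ} (h : a - 1 = b) {x : plusC M a} :
    x ∈ bcycles (plusDelta M) a ↔ plusDiff M h x = 0 := by
  subst h
  rfl

theorem mem_bbound_iff {a b : ℤ} (h : a - 1 = b) {y : plusC M b} :
    y ∈ bbound (plusDelta M) b ↔ y ∈ range (plusDiff M h) := by
  obtain rfl : a = b + 1 := by omega
  rfl

theorem mem_cocycles_iff {s t : ℤ} (h : s + 1 = t) {x : pprodC M s} :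
    x ∈ cocycles (pprodD M) s ↔ pprodDiff M h x = 0 := by
  subst h
  rfl

theorem mem_cobound_iff {s t : ℤ} (h : s + 1 = t) {y : pprodC M t} :
    y ∈ cobound (pprodD M) t ↔ y ∈ range (pprodDiff M h) := by
  obtain rfl : s = t - 1 := by omega
  rfl

theorem plusDiff_plusDiff {a b c : ℤ} (hab : a - 1 = b) (hbc : b - 1 = c) (x : plusC M a) :
    plusDiff M hbc (plusDiff M hab x) = 0 := by
  funext k
  simp only [plusDiff_apply, map_add]
  rw [β_fcast _ (M.β _ _), M.ββ, δ_fcast _ (M.δ _ _), M.δδ]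
  simp only [map_zero, zero_add, add_zero]
  exact fcast_β_fcast_δ_add_fcast_δ_fcast_β (M := M) _ _ _ _ (x (k + 1))

theorem projS2_apply {a b : ℤ} (h : b + 2 = a) (x : plusC M a) (k : ℕ) :
    projS2 M a b h x k = fcast (κ := κ) (C := M.C)
      (show a - 2 * ((k + 1 : ℕ) : ℤ) = b - 2 * (k : ℤ) by push_cast; omega) (x (k + 1)) :=
  rfl

theorem projS2_surjective {a b : ℤ} (h : b + 2 = a) : Function.Surjective (projS2 M a b h) :=
  fun x => ⟨inclS2 M b a h x, funext fun _ => fcast_fcast (κ := κ) (C := M.C) _ _ _⟩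

theorem projS2_plusDiff {a b a' b' : ℤ} (hab : a - 1 = b) (hab' : a' - 1 = b')
    (ha : a' + 2 = a) (hb : b' + 2 = b) (x : plusC M a) :
    projS2 M b b' hb (plusDiff M hab x) = plusDiff M hab' (projS2 M a a' ha x) := by
  funext k
  simp only [projS2_apply, plusDiff_apply, map_add, β_fcast, δ_fcast, fcast_fcast]

theorem projS2_mem_bcycles {a b : ℤ} (h : b + 2 = a) {x : plusC M a}
    (hx : x ∈ bcycles (plusDelta M) a) : projS2 M a b h x ∈ bcycles (plusDelta M) b := by
  rw [mem_bcycles_iff rfl] at hx ⊢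
  rw [← projS2_plusDiff rfl rfl h (by omega), hx, map_zero]

theorem projS2_mem_bbound {a b : ℤ} (h : b + 2 = a) {x : plusC M a}
    (hx : x ∈ bbound (plusDelta M) a) : projS2 M a b h x ∈ bbound (plusDelta M) b := by
  rw [mem_bbound_iff (add_sub_cancel_right _ 1)] at hx ⊢
  obtain ⟨y, rfl⟩ := hx
  exact ⟨projS2 M (a + 1) (b + 1) (by omega) y, (projS2_plusDiff _ _ _ _ y).symm⟩

end Differentials

section PeriodicComplex

variable (M : Mixed κ)

/-- The projection `𝕡C^s → ^+C^a` onto the components of degree `≤ a`, for `a ≡ s mod 2`. -/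
def pprodToPlus {s a : ℤ} (h : a % 2 = s % 2) : pprodC M s →ₗ[κ] plusC M a :=
  LinearMap.pi fun k : ℕ =>
    LinearMap.proj (⟨a - 2 * (k : ℤ), by omega⟩ : {m : ℤ // m % 2 = s % 2})

variable {M}

theorem pprodToPlus_apply {s a : ℤ} (h : a % 2 = s % 2) (x : pprodC M s) (k : ℕ) :
    pprodToPlus M h x k = x ⟨a - 2 * (k : ℤ), by omega⟩ :=
  rfl

theorem projS2_pprodToPlus {s a b : ℤ} (h : b + 2 = a) (ha : a % 2 = s % 2)
    (hb : b % 2 = s % 2) (x : pprodC M s) :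
    projS2 M a b h (pprodToPlus M ha x) = pprodToPlus M hb x :=
  funext fun _ => fcast_pprodC x _ _

theorem pprodDiff_apply {s t : ℤ} (h : s + 1 = t) (x : pprodC M s) {n : ℤ} (hn : n % 2 = t % 2) :
    pprodDiff M h x ⟨n, hn⟩ =
      fcast (κ := κ) (C := M.C) (sub_add_cancel n 1) (M.δ _ (x ⟨n - 1, by omega⟩))
      + fcast (κ := κ) (C := M.C) (add_sub_cancel_right n 1) (M.β _ (x ⟨n + 1, by omega⟩)) := by
  subst h
  rfl

theorem plusDiff_pprodToPlus {s t a b : ℤ} (hst : s + 1 = t) (hab : a - 1 = b)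
    (ha : a % 2 = s % 2) (hb : b % 2 = t % 2) (x : pprodC M s) :
    plusDiff M hab (pprodToPlus M ha x) = pprodToPlus M hb (pprodDiff M hst x) := by
  funext k
  rw [plusDiff_apply, pprodToPlus_apply, pprodToPlus_apply, pprodToPlus_apply, pprodDiff_apply,
    add_comm]
  congr 1
  · rw [← fcast_pprodC x (show a - 2 * ((k + 1 : ℕ) : ℤ) = b - 2 * (k : ℤ) - 1 by
      push_cast; omega), δ_fcast, fcast_fcast]
  · rw [← fcast_pprodC x (show a - 2 * (k : ℤ) = b - 2 * (k : ℤ) + 1 by omega), β_fcast,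
      fcast_fcast]

theorem exists_eq_add_two_mul_sub_two_mul {a n : ℤ} (h : n % 2 = a % 2) :
    ∃ k j : ℕ, a + 2 * (k : ℤ) - 2 * (j : ℤ) = n :=
  ⟨((n - a) / 2).toNat, ((a - n) / 2).toNat, by omega⟩

theorem eq_zero_of_pprodToPlus_eq_zero {s a : ℤ} (h : a % 2 = s % 2) {x : pprodC M s}
    (hx : ∀ k : ℕ, pprodToPlus M (show (a + 2 * (k : ℤ)) % 2 = s % 2 by omega) x = 0) :
    x = 0 := by
  funext ⟨n, hn⟩
  obtain ⟨k, j, rfl⟩ := exists_eq_add_two_mul_sub_two_mul (hn.trans h.symm)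
  exact congrFun (hx k) j

theorem pprodDiff_pprodDiff {s t u : ℤ} (hst : s + 1 = t) (htu : t + 1 = u) (x : pprodC M s) :
    pprodDiff M htu (pprodDiff M hst x) = 0 := by
  refine eq_zero_of_pprodToPlus_eq_zero (a := u) rfl fun k => ?_
  rw [← plusDiff_pprodToPlus htu (add_sub_cancel_right _ 1) (by omega),
    ← plusDiff_pprodToPlus hst (add_sub_cancel_right _ 1) (by omega), plusDiff_plusDiff]

theorem pprodToPlus_mem_bcycles {s a : ℤ} (h : a % 2 = s % 2) {x : pprodC M s}
    (hx : x ∈ cocycles (pprodD M) s) : pprodToPlus M h x ∈ bcycles (plusDelta M) a := by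
  rw [mem_cocycles_iff rfl] at hx
  rw [mem_bcycles_iff rfl, plusDiff_pprodToPlus rfl rfl h (by omega), hx, map_zero]

theorem pprodToPlus_mem_bbound {s a : ℤ} (h : a % 2 = s % 2) {x : pprodC M s}
    (hx : x ∈ cobound (pprodD M) s) : pprodToPlus M h x ∈ bbound (plusDelta M) a := by
  rw [mem_cobound_iff (sub_add_cancel s 1)] at hx
  rw [mem_bbound_iff (add_sub_cancel_right a 1)]
  obtain ⟨y, rfl⟩ := hx
  exact ⟨pprodToPlus M (by omega) y, plusDiff_pprodToPlus _ _ _ _ y⟩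

end PeriodicComplex

section ChainTower

variable (M : Mixed κ)

/-- The structure map `^+C^{a+2(k+1)} → ^+C^{a+2k}` of the tower of chains. -/
abbrev plusTower (a : ℤ) (k : ℕ) :
    plusC M (a + 2 * ((k + 1 : ℕ) : ℤ)) →ₗ[κ] plusC M (a + 2 * (k : ℤ)) :=
  projS2 M _ _ (by push_cast; ring)

/-- The structure map of the tower of cycles of degree `a + 2k`. -/
def cyclesTower (a : ℤ) (k : ℕ) :
    bcycles (plusDelta M) (a + 2 * ((k + 1 : ℕ) : ℤ)) →ₗ[κ]
      bcycles (plusDelta M) (a + 2 * (k : ℤ)) :=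
  (plusTower M a k).restrict fun _ => projS2_mem_bcycles _

/-- The map `Φ` of the tower of chains of degree `a + 2k`. -/
def plusPhi (a : ℤ) :
    (∀ k : ℕ, plusC M (a + 2 * (k : ℤ))) →ₗ[κ] ∀ k : ℕ, plusC M (a + 2 * (k : ℤ)) :=
  phiMap (A := fun k : ℕ => plusC M (a + 2 * (k : ℤ))) (plusTower M a)

/-- The map `Φ` of the tower of cycles of degree `a + 2k`. -/
def cyclesPhi (a : ℤ) :
    (∀ k : ℕ, bcycles (plusDelta M) (a + 2 * (k : ℤ))) →ₗ[κ]
      ∀ k : ℕ, bcycles (plusDelta M) (a + 2 * (k : ℤ)) :=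
  phiMap (A := fun k : ℕ => bcycles (plusDelta M) (a + 2 * (k : ℤ))) (cyclesTower M a)

/-- The canonical map from `𝕡C^s` to the product of the chains of degree `a + 2k`. -/
def pprodToTower {s a : ℤ} (h : a % 2 = s % 2) :
    pprodC M s →ₗ[κ] ∀ k : ℕ, plusC M (a + 2 * (k : ℤ)) :=
  LinearMap.pi fun k => pprodToPlus M (show (a + 2 * (k : ℤ)) % 2 = s % 2 by omega)

/-- The map from cocycles of `𝕡C^s` to cycles of `^+C^a` induced by the projection. -/
def cocyclesToCycles {s a : ℤ} (h : a % 2 = s % 2) :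
    cocycles (pprodD M) s →ₗ[κ] bcycles (plusDelta M) a :=
  (pprodToPlus M h).restrict fun _ => pprodToPlus_mem_bcycles h

/-- The canonical map from the cocycles of `𝕡C^s` to the product of the cycles of degree
`a + 2k`. -/
def cocyclesToTower {s a : ℤ} (h : a % 2 = s % 2) :
    cocycles (pprodD M) s →ₗ[κ] ∀ k : ℕ, bcycles (plusDelta M) (a + 2 * (k : ℤ)) :=
  LinearMap.pi fun k => cocyclesToCycles M (show (a + 2 * (k : ℤ)) % 2 = s % 2 by omega)

/-- The differential of `^+C` corestricted to the cycles. -/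
def plusDiffCycles {a b : ℤ} (h : a - 1 = b) : plusC M a →ₗ[κ] bcycles (plusDelta M) b :=
  (plusDiff M h).codRestrict _ fun x => (mem_bcycles_iff rfl).2 (plusDiff_plusDiff h rfl x)

/-- The differential of `𝕡C` corestricted to the cocycles. -/
def pprodDiffCocycles {s t : ℤ} (h : s + 1 = t) : pprodC M s →ₗ[κ] cocycles (pprodD M) t :=
  (pprodDiff M h).codRestrict _ fun x => (mem_cocycles_iff rfl).2 (pprodDiff_pprodDiff h rfl x)

/-- The product over `k` of the differentials from chains of degree `a + 2k` to cycles of degree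
`b + 2k`. -/
def towerDiff {a b : ℤ} (h : a - 1 = b) :
    (∀ k : ℕ, plusC M (a + 2 * (k : ℤ))) →ₗ[κ]
      ∀ k : ℕ, bcycles (plusDelta M) (b + 2 * (k : ℤ)) :=
  LinearMap.piMap fun k => plusDiffCycles M (show a + 2 * (k : ℤ) - 1 = b + 2 * (k : ℤ) by omega)

variable {M}

theorem plusPhi_surjective (a : ℤ) : Function.Surjective (plusPhi M a) :=
  phiMap_surjective fun _ => projS2_surjective _

theorem fcast_compatible_family {a : ℤ} {x : ∀ k : ℕ, plusC M (a + 2 * (k : ℤ))}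
    (hx : ∀ k, plusTower M a k (x (k + 1)) = x k) {n : ℤ} {k j l m : ℕ}
    (hkj : a + 2 * (k : ℤ) - 2 * (j : ℤ) = n) (hlm : a + 2 * (l : ℤ) - 2 * (m : ℤ) = n) :
    fcast (κ := κ) (C := M.C) hkj (x k j) = fcast (κ := κ) (C := M.C) hlm (x l m) := by
  wlog hkl : k ≤ l generalizing k j l m
  · exact (this hlm hkj (le_of_not_ge hkl)).symm
  induction l, hkl using Nat.le_induction generalizing m with
  | base =>
    obtain rfl : j = m := by omega
    rfl
  | succ l hl ih =>
    obtain ⟨m, rfl⟩ : ∃ m', m = m' + 1 := ⟨m - 1, by omega⟩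
    rw [ih (by omega : a + 2 * (l : ℤ) - 2 * (m : ℤ) = n), ← hx l, projS2_apply, fcast_fcast]

theorem exact_pprodToTower {s a : ℤ} (h : a % 2 = s % 2) :
    Function.Exact (pprodToTower M h) (plusPhi M a) := by
  intro x
  rw [plusPhi, phiMap_eq_zero_iff]
  constructor
  · intro hx
    choose k j hkj using fun n : {m : ℤ // m % 2 = s % 2} =>
      exists_eq_add_two_mul_sub_two_mul (n.2.trans h.symm)
    refine ⟨fun n => fcast (κ := κ) (C := M.C) (hkj n) (x (k n) (j n)),
      funext fun l => funext fun m => ?_⟩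
    exact fcast_compatible_family hx _ rfl
  · rintro ⟨w, rfl⟩ k
    exact projS2_pprodToPlus (by push_cast; ring) (by omega) (by omega) w

theorem cocyclesToTower_injective {s a : ℤ} (h : a % 2 = s % 2) :
    Function.Injective (cocyclesToTower M h) :=
  (injective_iff_map_eq_zero _).2 fun _ hx =>
    Subtype.ext <| eq_zero_of_pprodToPlus_eq_zero h fun k => congrArg Subtype.val (congrFun hx k)

theorem exact_cocyclesToTower {s a : ℤ} (h : a % 2 = s % 2) :
    Function.Exact (cocyclesToTower M h) (cyclesPhi M a) := by
  intro z
  rw [cyclesPhi, phiMap_eq_zero_iff]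
  constructor
  · intro hz
    obtain ⟨w, hw⟩ := (exact_pprodToTower h fun k => (z k).1).1
      (phiMap_eq_zero_iff.2 fun k => congrArg Subtype.val (hz k))
    have hw_cocycle : w ∈ cocycles (pprodD M) s := by
      rw [mem_cocycles_iff rfl]
      refine eq_zero_of_pprodToPlus_eq_zero (a := a - 1) (by omega) fun k => ?_
      rw [← plusDiff_pprodToPlus rfl (by ring : a + 2 * (k : ℤ) - 1 = _) (by omega),
        ← mem_bcycles_iff, show pprodToPlus M _ w = (z k).1 from congrFun hw k]
      exact (z k).2
    exact ⟨⟨w, hw_cocycle⟩, funext fun k => Subtype.ext (congrFun hw k)⟩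
  · rintro ⟨w, rfl⟩ k
    exact Subtype.ext (projS2_pprodToPlus (by push_cast; ring) (by omega) (by omega) w.1)

theorem cyclesPhi_comp_towerDiff {a b : ℤ} (h : a - 1 = b) :
    cyclesPhi M b ∘ₗ towerDiff M h = towerDiff M h ∘ₗ plusPhi M a :=
  phiMap_comp_piMap fun _ => LinearMap.ext fun x =>
    Subtype.ext (projS2_plusDiff (by omega) (by omega) (by push_cast; ring) (by push_cast; ring) x)

theorem cocyclesToTower_comp_pprodDiffCocycles {s t a b : ℤ} (hst : s + 1 = t) (hab : a - 1 = b)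
    (ha : a % 2 = s % 2) (hb : b % 2 = t % 2) :
    cocyclesToTower M hb ∘ₗ pprodDiffCocycles M hst = towerDiff M hab ∘ₗ pprodToTower M ha :=
  LinearMap.ext fun x => funext fun _ =>
    Subtype.ext (plusDiff_pprodToPlus hst (by omega) (by omega) (by omega) x).symm

end ChainTower

section HomologyTower

variable (M : Mixed κ)

/-- The product over `k` of the inclusions of the cycles of degree `a + 2k` into the chains. -/
def cyclesSubtype (a : ℤ) :
    (∀ k : ℕ, bcycles (plusDelta M) (a + 2 * (k : ℤ))) →ₗ[κ]
      ∀ k : ℕ, plusC M (a + 2 * (k : ℤ)) :=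
  LinearMap.piMap fun _ => Submodule.subtype _

/-- The product over `k` of the quotient maps from cycles of degree `a + 2k` to homology. -/
def homologyMk (a : ℤ) :
    (∀ k : ℕ, bcycles (plusDelta M) (a + 2 * (k : ℤ))) →ₗ[κ]
      ∀ k : ℕ, homologyC (plusDelta M) (a + 2 * (k : ℤ)) :=
  LinearMap.piMap fun _ => Submodule.mkQ _

/-- The quotient map from cocycles of `𝕡C^s` to cohomology. -/
def cohomologyMk (s : ℤ) : cocycles (pprodD M) s →ₗ[κ] cohomology (pprodD M) s :=
  Submodule.mkQ _

/-- The map `𝕡H^s → ^+H^δ_a` induced by the projection `𝕡C^s → ^+C^a`. -/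
def cohomologyToHomology {s a : ℤ} (h : a % 2 = s % 2) :
    cohomology (pprodD M) s →ₗ[κ] homologyC (plusDelta M) a :=
  Submodule.mapQ _ _ (cocyclesToCycles M h) fun _ => pprodToPlus_mem_bbound h

/-- The canonical map from `𝕡H^s` to the product of the `^+H^δ_{a+2k}`. -/
def cohomologyToTower {s a : ℤ} (h : a % 2 = s % 2) :
    cohomology (pprodD M) s →ₗ[κ] ∀ k : ℕ, homologyC (plusDelta M) (a + 2 * (k : ℤ)) :=
  LinearMap.pi fun k => cohomologyToHomology M (show (a + 2 * (k : ℤ)) % 2 = s % 2 by omega)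

variable {M}

theorem homologyMk_surjective (a : ℤ) : Function.Surjective (homologyMk M a) :=
  Function.Surjective.piMap fun _ => Submodule.mkQ_surjective _

theorem cohomologyMk_surjective (s : ℤ) : Function.Surjective (cohomologyMk M s) :=
  Submodule.mkQ_surjective _

theorem exact_cyclesSubtype_towerDiff {a b : ℤ} (h : a - 1 = b) :
    Function.Exact (cyclesSubtype M a) (towerDiff M h) :=
  exact_piMap fun k x => by
    rw [Submodule.coe_subtype, Subtype.range_coe, SetLike.mem_coe,
      mem_bcycles_iff (by omega : a + 2 * (k : ℤ) - 1 = b + 2 * (k : ℤ))]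
    exact Subtype.ext_iff

theorem cyclesSubtype_injective (a : ℤ) : Function.Injective (cyclesSubtype M a) :=
  Function.Injective.piMap fun _ => Subtype.val_injective

theorem exact_towerDiff_homologyMk {a b : ℤ} (h : a - 1 = b) :
    Function.Exact (towerDiff M h) (homologyMk M b) :=
  exact_piMap fun k x => by
    rw [Submodule.mkQ_apply, Submodule.Quotient.mk_eq_zero, Submodule.mem_comap,
      mem_bbound_iff (by omega : a + 2 * (k : ℤ) - 1 = b + 2 * (k : ℤ))]
    exact exists_congr fun y => ⟨fun h => Subtype.ext h, congrArg Subtype.val⟩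

theorem exact_pprodDiffCocycles_cohomologyMk {s t : ℤ} (h : s + 1 = t) :
    Function.Exact (pprodDiffCocycles M h) (cohomologyMk M t) := fun x => by
  rw [cohomologyMk, Submodule.mkQ_apply, Submodule.Quotient.mk_eq_zero, Submodule.mem_comap,
    mem_cobound_iff h]
  exact exists_congr fun y => ⟨fun h => Subtype.ext h, congrArg Subtype.val⟩

theorem SmapDelta_mk {a b : ℤ} (h : b + 2 = a) (x : bcycles (plusDelta M) a) :
    SmapDelta M a b h (Submodule.Quotient.mk x) =
      Submodule.Quotient.mk ⟨projS2 M a b h x, projS2_mem_bcycles h x.2⟩ := by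
  rw [SmapDelta, hMap₂, dif_pos ⟨fun _ => projS2_mem_bcycles h, fun _ => projS2_mem_bbound h⟩]
  rfl

theorem phiDelta_comp_homologyMk (a : ℤ) :
    phiDelta M a ∘ₗ homologyMk M a = homologyMk M a ∘ₗ cyclesPhi M a :=
  phiMap_comp_piMap fun _ => LinearMap.ext fun x => SmapDelta_mk _ x

theorem cohomologyToTower_comp_cohomologyMk {s a : ℤ} (h : a % 2 = s % 2) :
    cohomologyToTower M h ∘ₗ cohomologyMk M s = homologyMk M a ∘ₗ cocyclesToTower M h :=
  rfl

theorem SmapDelta_cohomologyToHomology {s a b : ℤ} (h : b + 2 = a) (ha : a % 2 = s % 2)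
    (hb : b % 2 = s % 2) (c : cohomology (pprodD M) s) :
    SmapDelta M a b h (cohomologyToHomology M ha c) = cohomologyToHomology M hb c := by
  obtain ⟨x, rfl⟩ := cohomologyMk_surjective s c
  exact (SmapDelta_mk h _).trans
    (congrArg Submodule.Quotient.mk (Subtype.ext (projS2_pprodToPlus h ha hb x.1)))

theorem cohomologyToHomology_eq_zero_of_le {s a b : ℤ} (hba : b ≤ a) (ha : a % 2 = s % 2)
    (hb : b % 2 = s % 2) {c : cohomology (pprodD M) s} (hc : cohomologyToHomology M ha c = 0) :
    cohomologyToHomology M hb c = 0 := by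
  obtain ⟨n, hn⟩ : ∃ n : ℕ, a = b + 2 * (n : ℤ) := ⟨((a - b) / 2).toNat, by omega⟩
  induction n generalizing a with
  | zero =>
    obtain rfl : a = b := by omega
    exact hc
  | succ n ih =>
    refine ih (a := a - 2) (by omega) (by omega) ?_ (by omega)
    rw [← SmapDelta_cohomologyToHomology (sub_add_cancel a 2) ha, hc, map_zero]

theorem ker_cohomologyToTower_le {s a b : ℤ} (ha : a % 2 = s % 2) (hb : b % 2 = s % 2) :
    ker (cohomologyToTower M ha) ≤ ker (cohomologyToTower M hb) := by
  intro c hc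
  refine funext fun k => ?_
  exact cohomologyToHomology_eq_zero_of_le
    (a := a + 2 * ((b + 2 * (k : ℤ) - a).toNat : ℤ)) (by omega) _ _ (congrFun hc _)

theorem exact_cohomologyToTower_phiDelta {s a : ℤ} (h : a % 2 = s % 2) :
    Function.Exact (cohomologyToTower M h) (phiDelta M a) :=
  exact_cokernels (plusPhi_surjective (a + 1)) (exact_cocyclesToTower h)
    (cyclesPhi_comp_towerDiff (add_sub_cancel_right a 1))
    (exact_towerDiff_homologyMk _) (exact_towerDiff_homologyMk _)
    (cohomologyMk_surjective s) (homologyMk_surjective a)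
    (cohomologyToTower_comp_cohomologyMk h) (phiDelta_comp_homologyMk a)

theorem homologyMk_mem_range_phiDelta_iff (a : ℤ)
    (z : ∀ k : ℕ, bcycles (plusDelta M) (a + 2 * (k : ℤ))) :
    homologyMk M a z ∈ range (phiDelta M a) ↔ z ∈ range (cyclesPhi M a) :=
  mem_range_cokernelMap_iff (plusPhi_surjective (a + 1))
    (cyclesPhi_comp_towerDiff (add_sub_cancel_right a 1))
    (exact_towerDiff_homologyMk _) (homologyMk_surjective a) (phiDelta_comp_homologyMk a) z

theorem exists_connecting {s t a b : ℤ} (hst : s + 1 = t) (hab : a - 1 = b)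
    (ha : a % 2 = s % 2) (hb : b % 2 = t % 2) :
    ∃ δ : (∀ k : ℕ, bcycles (plusDelta M) (a + 2 * (k : ℤ))) →ₗ[κ] cohomology (pprodD M) t,
      Function.Exact (cyclesPhi M a) δ ∧
        Function.Exact δ (cohomologyToTower M hb) := by
  have hsq := cyclesPhi_comp_towerDiff (M := M) hab
  have hsq₁ := cocyclesToTower_comp_pprodDiffCocycles (M := M) hst hab ha hb
  refine ⟨SnakeLemma.δ' (pprodDiffCocycles M hst) (towerDiff M hab) (towerDiff M hab)
    (pprodToTower M ha) (plusPhi M a) (exact_pprodToTower ha)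
    (cocyclesToTower M hb) (cyclesPhi M b) (exact_cocyclesToTower hb) hsq₁ hsq
    (cyclesSubtype M a) (exact_cyclesSubtype_towerDiff hab)
    (cohomologyMk M t) (exact_pprodDiffCocycles_cohomologyMk hst)
    (plusPhi_surjective a) (cocyclesToTower_injective hb), ?_, ?_⟩
  · exact SnakeLemma.exact_δ'_right _ _ _ _ _ _ _ _ _ _ _ (cyclesSubtype M a)
      (exact_cyclesSubtype_towerDiff hab) _ _ _ _ _ _ _
      (phiMap_comp_piMap fun _ => rfl) (cyclesSubtype_injective a)
  · exact SnakeLemma.exact_δ'_left _ _ _ _ _ _ _ _ _ _ _ _ _ _ _ (homologyMk M b)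
      (exact_towerDiff_homologyMk hab) _ _ _ rfl (cohomologyMk_surjective t)

theorem exists_injective_range_eq_ker_cohomologyToTower {s t a b : ℤ} (hst : s + 1 = t)
    (hab : a - 1 = b) (ha : a % 2 = s % 2) (hb : b % 2 = t % 2) :
    ∃ f : ((∀ k : ℕ, homologyC (plusDelta M) (a + 2 * (k : ℤ))) ⧸ range (phiDelta M a)) →ₗ[κ]
        cohomology (pprodD M) t,
      Function.Injective f ∧ range f = ker (cohomologyToTower M hb) := by
  obtain ⟨δ, hδ_ker, hδ_range⟩ := exists_connecting (M := M) hst hab ha hb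
  set p := (range (phiDelta M a)).mkQ ∘ₗ homologyMk M a
  have hp : Function.Surjective p :=
    (Submodule.mkQ_surjective _).comp (homologyMk_surjective a)
  have hker : ker p = ker δ := by
    ext z
    rw [hδ_ker.linearMap_ker_eq, ← homologyMk_mem_range_phiDelta_iff]
    exact Submodule.Quotient.mk_eq_zero _
  obtain ⟨f, hf, hfp⟩ := exists_injective_comp_eq hp hker
  refine ⟨f, hf, ?_⟩
  rw [hδ_range.linearMap_ker_eq, ← hfp, range_comp_of_range_eq_top f (range_eq_top.2 hp)]

end HomologyTower

/-- for every `r` there is a short exact sequence of `κ`-vector spaces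
`0 → lim¹_k ^+H^δ_{r-1+2k} → 𝕡H^r → lim_k ^+H^δ_{r+2k} → 0`, where `lim = ker Φ` and
`lim¹ = coker Φ` for `Φ((a_k)) = (a_k - S(a_{k+1}))`. -/
theorem statement1 (κ : Type) [Field κ] (M : Mixed κ) (r : ℤ) :
    ∃ (f : ((∀ k : ℕ, homologyC (plusDelta M) (r - 1 + 2 * (k : ℤ))) ⧸
              LinearMap.range (phiDelta M (r - 1))) →ₗ[κ] cohomology (pprodD M) r)
      (g : cohomology (pprodD M) r →ₗ[κ] ↥(LinearMap.ker (phiDelta M r))),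
      Function.Injective f ∧ Function.Surjective g ∧ LinearMap.range f = LinearMap.ker g := by
  obtain ⟨f, hf, hf_range⟩ := exists_injective_range_eq_ker_cohomologyToTower (M := M)
    (sub_add_cancel r 1) (sub_sub r 1 1) rfl (show (r - (1 + 1)) % 2 = r % 2 by omega)
  have hg : Function.Exact (cohomologyToTower M (rfl : r % 2 = r % 2)) (phiDelta M r) :=
    exact_cohomologyToTower_phiDelta rfl
  have hg_mem (c : cohomology (pprodD M) r) : cohomologyToTower M rfl c ∈ ker (phiDelta M r) :=
    hg.apply_apply_eq_zero c
  refine ⟨f, (cohomologyToTower M rfl).codRestrict _ hg_mem, hf, ?_, ?_⟩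
  · rintro ⟨z, hz⟩
    obtain ⟨c, hc⟩ := (hg z).1 hz
    exact ⟨c, Subtype.ext hc⟩
  · rw [hf_range, ker_codRestrict]
    -- The snake lemma has produced the tower starting in degree `r - 2` instead of `r`.
    exact (ker_cohomologyToTower_le _ _).antisymm (ker_cohomologyToTower_le _ _)

end CDGA
end

section
/- Let f : (C₁, δ₁, β₁) → (C₂, δ₂, β₂) be a morphism of mixed complexes over κ. If the induced map H_n(f) : H_n(C₁, β₁) → H_n(C₂, β₂) on the homology of the chain complexes (C_i, β_i) is an isomorphism for every n, then the induced maps ^+H^δ_r(f) : ^+H^δ_r(C₁) → ^+H^δ_r(C₂) and 𝕡H^r(f) : 𝕡H^r(C₁) → 𝕡H^r(C₂) are isomorphisms for every r. -/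
open LinearMap DirectSum

namespace CDGA

/-!
The cone of `f` is again a mixed complex, and it is `β`-acyclic because `f` is a quasi-isomorphism
for `β`. In a `β`-acyclic mixed complex, let `s` choose `β`-primitives of `β`-cycles. To solve
`(δ + β) e = w` for a `(δ + β)`-cycle `w`, solve `e = s (w - δ e)`, which determines the components
of `e` recursively from low to high degree since complexes vanish in negative degrees. The component
of `(δ + β) e = w` in degree `n` only uses the cycle condition in degrees `n - 1, n - 3, …`, so the
argument applies to `^+C` and to `𝕡C` alike, and the acyclicity of both complexes of the cone
gives both isomorphisms.
-/

theorem exists_fixedPoint_of_causal {C : ℤ → Type*} [∀ n, Nonempty (C n)]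
    (hC : ∀ n < 0, Subsingleton (C n)) (Φ : (∀ n, C n) → ∀ n, C n)
    (hΦ : ∀ n x y, (∀ m < n, x m = y m) → Φ x n = Φ y n) : ∃ e, Φ e = e := by
  classical
  let e : ∀ n, C n := (measure Int.toNat).wf.fix fun n prev =>
    Φ (fun m => if h : m.toNat < n.toNat then prev m h else Classical.arbitrary _) n
  refine ⟨e, funext fun n => ?_⟩
  rw [show e n = _ from WellFounded.fix_eq _ _ n]
  refine hΦ n _ _ fun m hm => ?_
  by_cases hm0 : m < 0
  · have := hC m hm0
    exact Subsingleton.elim _ _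
  · have hlt : m.toNat < n.toNat := by lia
    change e m = dite _ _ _
    rw [dif_pos hlt]

theorem surjective_pi_comp_of_injective {ι ι' : Type*} {C : ι' → Type*}
    [∀ n, Nonempty (C n)] {i : ι → ι'} (hi : Function.Injective i) :
    Function.Surjective fun (w : ∀ n, C n) k => w (i k) := by
  classical
  refine fun x => ⟨fun n => if h : ∃ k, i k = n then h.choose_spec ▸ x h.choose else
    Classical.arbitrary _, funext fun k => ?_⟩
  have h : ∃ k', i k' = i k := ⟨k, rfl⟩
  have transport_apply (k' : ι) (hk' : i k' = i k) : hk' ▸ x k' = x k := by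
    obtain rfl := hi hk'
    rfl
  exact (dif_pos h).trans (transport_apply _ h.choose_spec)

section InducedMapCriteria

theorem bijective_mapQ_restrict_iff {R A₁ A₂ : Type*} [Ring R] [AddCommGroup A₁] [Module R A₁]
    [AddCommGroup A₂] [Module R A₂] {Z₁ B₁ : Submodule R A₁} {Z₂ B₂ : Submodule R A₂}
    {g : A₁ →ₗ[R] A₂} (hZ : ∀ x ∈ Z₁, g x ∈ Z₂)
    (hB : B₁.comap Z₁.subtype ≤ (B₂.comap Z₂.subtype).comap (g.restrict hZ)) :
    Function.Bijective (Submodule.mapQ _ _ (g.restrict hZ) hB) ↔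
      (∀ x ∈ Z₁, g x ∈ B₂ → x ∈ B₁) ∧ ∀ y ∈ Z₂, ∃ x ∈ Z₁, g x - y ∈ B₂ := by
  refine and_congr ?_ ?_
  · simp only [injective_iff_map_eq_zero, (Submodule.Quotient.mk_surjective _).forall,
      Submodule.mapQ_apply, Submodule.Quotient.mk_eq_zero, Subtype.forall]
    rfl
  · simp only [Function.Surjective, (Submodule.Quotient.mk_surjective _).forall,
      (Submodule.Quotient.mk_surjective _).exists, Submodule.mapQ_apply, Submodule.Quotient.eq,
      Subtype.forall, Subtype.exists]
    exact forall₂_congr fun _ _ => exists_congr fun _ =>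
      ⟨fun ⟨hx, h⟩ => ⟨hx, h⟩, fun ⟨hx, h⟩ => ⟨hx, h⟩⟩

variable {κ : Type} [Field κ] {C C₁ C₂ : ℤ → Type} [∀ n, AddCommGroup (C n)]
  [∀ n, Module κ (C n)] [∀ n, AddCommGroup (C₁ n)] [∀ n, Module κ (C₁ n)]
  [∀ n, AddCommGroup (C₂ n)] [∀ n, Module κ (C₂ n)]

theorem mem_bbound_iff_s3 {d : ∀ n : ℤ, C n →ₗ[κ] C (n - 1)} {m n : ℤ} (h : m - 1 = n) {x : C n} :
    x ∈ bbound d n ↔ ∃ y, fcast (κ := κ) h (d m y) = x := by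
  obtain rfl : m = n + 1 := by lia
  rfl

theorem mem_cobound_iff_s3 {d : ∀ n : ℤ, C n →ₗ[κ] C (n + 1)} {m n : ℤ} (h : m + 1 = n) {x : C n} :
    x ∈ cobound d n ↔ ∃ y, fcast (κ := κ) h (d m y) = x := by
  obtain rfl : m = n - 1 := by lia
  rfl

theorem hMap₂_bijective_iff {d₁ : ∀ n : ℤ, C₁ n →ₗ[κ] C₁ (n - 1)}
    {d₂ : ∀ n : ℤ, C₂ n →ₗ[κ] C₂ (n - 1)} {f : ∀ n : ℤ, C₁ n →ₗ[κ] C₂ n}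
    (hf : ∀ n x, d₂ n (f n x) = f (n - 1) (d₁ n x)) (n : ℤ) :
    Function.Bijective (hMap₂ d₁ d₂ n n (f n)) ↔
      (∀ x ∈ bcycles d₁ n, f n x ∈ bbound d₂ n → x ∈ bbound d₁ n) ∧
        ∀ y ∈ bcycles d₂ n, ∃ x ∈ bcycles d₁ n, f n x - y ∈ bbound d₂ n := by
  have map_bcycles : bcycles d₁ n ≤ (bcycles d₂ n).comap (f n) := fun x (hx : d₁ n x = 0) =>
    show d₂ n (f n x) = 0 by rw [hf, hx, map_zero]
  have map_bbound : bbound d₁ n ≤ (bbound d₂ n).comap (f n) := fun x hx => by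
    obtain ⟨m, rfl⟩ : ∃ m, n = m - 1 := ⟨n + 1, by ring⟩
    obtain ⟨y, rfl⟩ := (mem_bbound_iff_s3 rfl).1 hx
    exact (mem_bbound_iff_s3 rfl).2 ⟨f m y, hf m y⟩
  rw [hMap₂, dif_pos ⟨map_bcycles, map_bbound⟩]
  exact bijective_mapQ_restrict_iff _ _

theorem Hmap₂_bijective_iff {d₁ : ∀ n : ℤ, C₁ n →ₗ[κ] C₁ (n + 1)}
    {d₂ : ∀ n : ℤ, C₂ n →ₗ[κ] C₂ (n + 1)} {f : ∀ n : ℤ, C₁ n →ₗ[κ] C₂ n}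
    (hf : ∀ n x, d₂ n (f n x) = f (n + 1) (d₁ n x)) (n : ℤ) :
    Function.Bijective (Hmap₂ d₁ d₂ n n (f n)) ↔
      (∀ x ∈ cocycles d₁ n, f n x ∈ cobound d₂ n → x ∈ cobound d₁ n) ∧
        ∀ y ∈ cocycles d₂ n, ∃ x ∈ cocycles d₁ n, f n x - y ∈ cobound d₂ n := by
  have map_cocycles : cocycles d₁ n ≤ (cocycles d₂ n).comap (f n) := fun x (hx : d₁ n x = 0) =>
    show d₂ n (f n x) = 0 by rw [hf, hx, map_zero]
  have map_cobound : cobound d₁ n ≤ (cobound d₂ n).comap (f n) := fun x hx => by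
    obtain ⟨m, rfl⟩ : ∃ m, n = m + 1 := ⟨n - 1, by ring⟩
    obtain ⟨y, rfl⟩ := (mem_cobound_iff_s3 rfl).1 hx
    exact (mem_cobound_iff_s3 rfl).2 ⟨f m y, hf m y⟩
  rw [Hmap₂, dif_pos ⟨map_cocycles, map_cobound⟩]
  exact bijective_mapQ_restrict_iff _ _

end InducedMapCriteria

theorem fcast_prod {κ : Type} [Field κ] {A B : ℤ → Type} [∀ n, AddCommGroup (A n)]
    [∀ n, Module κ (A n)] [∀ n, AddCommGroup (B n)] [∀ n, Module κ (B n)] {m n : ℤ} (h : m = n)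
    (p : A (m - 1) × B m) :
    fcast (κ := κ) (C := fun n => A (n - 1) × B n) h p =
      (fcast (κ := κ) (congrArg (· - 1) h) p.1, fcast (κ := κ) h p.2) := by
  subst h
  rfl

namespace Mixed

variable {κ : Type} [Field κ]

section Total

variable (M : Mixed κ) {k l m n : ℤ}

/-- The differential `δ`, with target in any degree provably equal to `m + 1`. -/
def δTo (h : m + 1 = n) : M.C m →ₗ[κ] M.C n := (fcast h).comp (M.δ m)

/-- The differential `β`, with target in any degree provably equal to `m - 1`. -/
def βTo (h : m - 1 = n) : M.C m →ₗ[κ] M.C n := (fcast h).comp (M.β m)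

theorem fcast_δTo (h : k + 1 = l) (h' : l = m) (x : M.C k) :
    fcast (κ := κ) h' (M.δTo h x) = M.δTo (h.trans h') x := by
  subst h'
  rfl

theorem δTo_δTo (h : k + 1 = l) (h' : l + 1 = m) (x : M.C k) : M.δTo h' (M.δTo h x) = 0 := by
  subst h h'
  exact M.δδ k x

theorem βTo_δTo_add_δTo_βTo (h : m + 1 = n) (h' : n - 1 = m) (g : m - 1 = l) (g' : l + 1 = m)
    (x : M.C m) : M.βTo h' (M.δTo h x) + M.δTo g' (M.βTo g x) = 0 := by
  subst h g
  exact M.βδ m x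

/-- The product of all components, of which the terms of `^+C` and `𝕡C` are quotients. -/
abbrev Tot : Type := ∀ n : ℤ, M.C n

/-- The operator induced by `δ` on the product of all components. -/
def totδ : M.Tot →ₗ[κ] M.Tot :=
  LinearMap.pi fun n => (M.δTo (sub_add_cancel n 1)).comp (LinearMap.proj (n - 1))

/-- The operator induced by `β` on the product of all components. -/
def totβ : M.Tot →ₗ[κ] M.Tot :=
  LinearMap.pi fun n => (M.βTo (add_sub_cancel_right n 1)).comp (LinearMap.proj (n + 1))

/-- The total differential `δ + β` on the product of all components. -/
def totD : M.Tot →ₗ[κ] M.Tot := M.totδ + M.totβ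

theorem totD_apply (w : M.Tot) (n : ℤ) : M.totD w n = M.totδ w n + M.totβ w n := rfl

variable {M}

theorem totδ_apply (h : m + 1 = n) (w : M.Tot) : M.totδ w n = M.δTo h (w m) := by
  obtain rfl : m = n - 1 := by lia
  rfl

theorem totβ_apply (h : m - 1 = n) (w : M.Tot) : M.totβ w n = M.βTo h (w m) := by
  obtain rfl : m = n + 1 := by lia
  rfl

theorem totδ_totδ (w : M.Tot) : M.totδ (M.totδ w) = 0 :=
  funext fun _ => M.δTo_δTo _ _ _

theorem totβ_totδ (w : M.Tot) : M.totβ (M.totδ w) = -M.totδ (M.totβ w) := by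
  refine eq_neg_of_add_eq_zero_left (funext fun n => ?_)
  rw [Pi.add_apply, totβ_apply (add_sub_cancel_right n 1), totδ_apply rfl,
    totδ_apply (sub_add_cancel n 1), totβ_apply rfl]
  exact M.βTo_δTo_add_δTo_βTo _ _ _ _ _

theorem totδ_totD (w : M.Tot) : M.totδ (M.totD w) = -M.totβ (M.totδ w) := by
  rw [totD, LinearMap.add_apply, map_add, totδ_totδ, zero_add, totβ_totδ, neg_neg]

end Total

section Acyclic

variable {M : Mixed κ}

/-- Vanishing of the homology `H_n(C, β)` for all `n`. -/
def IsβAcyclic (M : Mixed κ) : Prop := ∀ n, bcycles M.β n ≤ bbound M.β n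

theorem IsβAcyclic.exists_totβ_eq (hM : M.IsβAcyclic) (w : M.Tot) :
    ∃ e, ∀ n, M.totβ (w - M.totδ e) (n - 1) = 0 → M.totβ e n = (w - M.totδ e) n := by
  have exists_primitive (n : ℤ) (z : M.C (n - 1)) :
      ∃ y : M.C n, M.β (n - 1) z = 0 → M.β n y = z := by
    by_cases hz : M.β (n - 1) z = 0
    · obtain ⟨y, hy⟩ := (mem_bbound_iff_s3 rfl).1 (hM _ hz)
      exact ⟨y, fun _ => hy⟩
    · exact ⟨0, fun h => absurd h hz⟩
  choose s hs using exists_primitive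
  obtain ⟨e, he⟩ := exists_fixedPoint_of_causal M.trivNeg
    (fun e n => s n ((w - M.totδ e) (n - 1))) fun n x y hxy => by
      simp only [Pi.sub_apply, totδ_apply (sub_add_cancel (n - 1) 1), hxy (n - 1 - 1) (by lia)]
  refine ⟨e, fun n hn => ?_⟩
  obtain ⟨m, rfl⟩ : ∃ m, n = m - 1 := ⟨n + 1, by ring⟩
  rw [totβ_apply rfl] at hn ⊢
  exact (congrArg (M.β m) (congrFun he m)).symm.trans (hs m _ hn)

/-- Acyclicity for `δ + β` of the degrees in `S` of a `β`-acyclic complex: `^+C^r` is the case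
`S = {r, r - 2, …}`, and `𝕡C^r` the case of all degrees of the parity of `r`. -/
theorem IsβAcyclic.exists_totD_eq (hM : M.IsβAcyclic) {S : Set ℤ} (hS : ∀ n ∈ S, n - 2 ∈ S)
    {w : M.Tot} (hw : ∀ n ∈ S, M.totD w (n - 1) = 0) : ∃ e, ∀ n ∈ S, M.totD e n = w n := by
  obtain ⟨e, he⟩ := hM.exists_totβ_eq w
  refine ⟨e, fun n => ?_⟩
  induction n using Int.strongRec (m := 0) with
  | lt n hn =>
    have := M.trivNeg n hn
    exact fun _ => Subsingleton.elim _ _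
  | ge n _ ih =>
    intro hn
    have hδw : M.totδ (M.totD e) (n - 1) = M.totδ w (n - 1) := by
      rw [totδ_apply (by ring : n - 2 + 1 = n - 1), totδ_apply (by ring : n - 2 + 1 = n - 1),
        ih (n - 2) (by lia) (hS n hn)]
    have hcycle : M.totβ (w - M.totδ e) (n - 1) = 0 := by
      calc M.totβ (w - M.totδ e) (n - 1)
        _ = M.totδ (M.totD e) (n - 1) + M.totβ w (n - 1) := by
          rw [totδ_totD, map_sub, Pi.sub_apply, Pi.neg_apply, neg_add_eq_sub]
        _ = M.totD w (n - 1) := by rw [hδw, totD_apply]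
        _ = 0 := hw n hn
    rw [totD_apply, he n hcycle, Pi.sub_apply, add_sub_cancel]

end Acyclic

/-- Morphisms of mixed complexes. -/
structure Hom (M₁ M₂ : Mixed κ) where
  app : ∀ n : ℤ, M₁.C n →ₗ[κ] M₂.C n
  δ_app : ∀ (n : ℤ) (x : M₁.C n), M₂.δ n (app n x) = app (n + 1) (M₁.δ n x)
  β_app : ∀ (n : ℤ) (x : M₁.C n), M₂.β n (app n x) = app (n - 1) (M₁.β n x)

namespace Hom

variable {M₁ M₂ : Mixed κ} (φ : Hom M₁ M₂)

/-- Morphisms inducing isomorphisms on the homologies `H_n(C, β)`. -/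
def IsβQuasiIso : Prop := ∀ n, Function.Bijective (hMap₂ M₁.β M₂.β n n (φ.app n))

/-- The map induced by a morphism on the products of all components. -/
def tot : M₁.Tot →ₗ[κ] M₂.Tot :=
  LinearMap.pi fun n => (φ.app n).comp (LinearMap.proj n)

theorem δTo_app {m n : ℤ} (h : m + 1 = n) (x : M₁.C m) :
    M₂.δTo h (φ.app m x) = φ.app n (M₁.δTo h x) := by
  subst h
  exact φ.δ_app m x

theorem βTo_app {m n : ℤ} (h : m - 1 = n) (x : M₁.C m) :
    M₂.βTo h (φ.app m x) = φ.app n (M₁.βTo h x) := by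
  subst h
  exact φ.β_app m x

theorem totD_tot (w : M₁.Tot) : M₂.totD (φ.tot w) = φ.tot (M₁.totD w) := by
  funext n
  exact (congr_arg₂ _ (φ.δTo_app _ _) (φ.βTo_app _ _)).trans (map_add _ _ _).symm

section Cone

/-- The mapping cone of a morphism of mixed complexes, with
`δ (x, y) = (-δ x, δ y)` and `β (x, y) = (-β x, β y + φ x)`. -/
def cone : Mixed κ where
  C n := M₁.C (n - 1) × M₂.C n
  trivNeg n hn :=
    have := M₁.trivNeg (n - 1) (by lia)
    have := M₂.trivNeg n hn
    inferInstance
  δ n := (-M₁.δTo (by ring)).prodMap (M₂.δ n)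
  β n := ((-M₁.β (n - 1)).comp (LinearMap.fst _ _ _)).prod
    ((M₂.β n).comp (LinearMap.snd _ _ _) + (φ.app (n - 1)).comp (LinearMap.fst _ _ _))
  δδ n p := Prod.ext (by simp [δTo_δTo]) (M₂.δδ n p.2)
  ββ n p := Prod.ext (by simp [M₁.ββ]) (by simp [M₂.ββ, φ.β_app])
  βδ n p := by
    refine (congrArg₂ (· + ·) (fcast_prod _ _) (fcast_prod _ _)).trans (Prod.ext ?_ ?_)
    · change fcast _ (-M₁.β _ (-M₁.δTo _ p.1)) + fcast _ (-M₁.δTo _ (-M₁.β _ p.1)) = 0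
      simp only [map_neg, neg_neg, fcast_δTo]
      exact M₁.βTo_δTo_add_δTo_βTo _ _ rfl _ p.1
    · change fcast _ (M₂.β _ (M₂.δ n p.2) + φ.app _ (-M₁.δTo _ p.1)) +
        fcast _ (M₂.δ _ (M₂.β n p.2 + φ.app _ p.1)) = 0
      have fcast_φδ : fcast (κ := κ) (by ring) (φ.app (n + 1 - 1) (M₁.δTo (by ring) p.1)) =
          φ.app n (M₁.δTo (sub_add_cancel n 1) p.1) := by
        rw [← δTo_app, fcast_δTo, δTo_app]
      have fcast_δφ : fcast (κ := κ) (sub_add_cancel n 1) (M₂.δ (n - 1) (φ.app (n - 1) p.1)) =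
          φ.app n (M₁.δTo (sub_add_cancel n 1) p.1) := φ.δTo_app _ p.1
      simp only [map_add, map_neg, fcast_φδ, fcast_δφ]
      rw [add_assoc, add_comm (fcast _ (M₂.δ _ _)), neg_add_cancel_left]
      exact M₂.βδ n p.2

variable {φ} in
theorem IsβQuasiIso.isβAcyclic_cone (hφ : φ.IsβQuasiIso) : φ.cone.IsβAcyclic := by
  have hφ' n := (hMap₂_bijective_iff φ.β_app n).1 (hφ n)
  intro n p hp
  obtain ⟨m, rfl⟩ : ∃ m, n = m - 1 := ⟨n + 1, by ring⟩
  obtain ⟨x, y⟩ := p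
  obtain ⟨hx, hxy⟩ := Prod.mk.inj (show (-M₁.β _ x, M₂.β _ y + φ.app _ x) = 0 from hp)
  obtain ⟨u, rfl⟩ : ∃ u, M₁.β (m - 1) u = x :=
    (mem_bbound_iff_s3 rfl).1 <| (hφ' _).1 x (neg_eq_zero.1 hx) <|
      (mem_bbound_iff_s3 rfl).2 ⟨-y, by
        rw [map_neg, map_neg]; exact neg_eq_of_add_eq_zero_right hxy⟩
  have hcycle : M₂.β (m - 1) (y + φ.app (m - 1) u) = 0 := by rwa [map_add, φ.β_app]
  obtain ⟨x', hx', hbound⟩ := (hφ' (m - 1)).2 _ hcycle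
  obtain ⟨v, hv⟩ := (mem_bbound_iff_s3 rfl).1 hbound
  refine (mem_bbound_iff_s3 rfl).2 ⟨(x' - u, -v), Prod.ext ?_ ?_⟩
  · change -M₁.β _ (x' - u) = M₁.β _ u
    rw [map_sub, show M₁.β _ x' = 0 from hx', zero_sub, neg_neg]
  · change M₂.β m (-v) + φ.app _ (x' - u) = y
    rw [map_neg, show M₂.β m v = _ from hv, map_sub]
    abel

/-- The element of the cone with components `x` and `y`; the degree of `x` is shifted by one. -/
def conePair (x : M₁.Tot) (y : M₂.Tot) : φ.cone.Tot := fun n => (x (n - 1), y n)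

theorem exists_eq_conePair (p : φ.cone.Tot) : ∃ x y, p = φ.conePair x y := by
  refine ⟨fun n => fcast (κ := κ) (add_sub_cancel_right n 1) (p (n + 1)).1, fun n => (p n).2,
    funext fun n => Prod.ext ?_ rfl⟩
  have fcast_fst (m : ℤ) (hm : m = n) (h : m - 1 = n - 1) :
      fcast (κ := κ) (C := M₁.C) h (p m).1 = (p n).1 := by
    subst hm
    rfl
  exact (fcast_fst _ (sub_add_cancel n 1) _).symm

theorem totD_conePair (x : M₁.Tot) (y : M₂.Tot) :
    φ.cone.totD (φ.conePair x y) = φ.conePair (-M₁.totD x) (M₂.totD y + φ.tot x) := by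
  have hδ : φ.cone.totδ (φ.conePair x y) = φ.conePair (-M₁.totδ x) (M₂.totδ y) := by
    funext n
    obtain ⟨m, rfl⟩ : ∃ m, n = m + 1 := ⟨n - 1, by ring⟩
    refine (totδ_apply rfl _).trans (Prod.ext ?_ (totδ_apply rfl y).symm)
    exact congrArg Neg.neg (totδ_apply (by ring) x).symm
  have hβ : φ.cone.totβ (φ.conePair x y) = φ.conePair (-M₁.totβ x) (M₂.totβ y + φ.tot x) := by
    funext n
    obtain ⟨m, rfl⟩ : ∃ m, n = m - 1 := ⟨n + 1, by ring⟩
    refine (totβ_apply rfl _).trans (Prod.ext ?_ ?_)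
    · exact congrArg Neg.neg (totβ_apply rfl x).symm
    · exact congrArg (· + φ.tot x (m - 1)) (totβ_apply rfl y).symm
  funext n
  refine (congrArg₂ (· + ·) (congrFun hδ n) (congrFun hβ n)).trans (Prod.ext ?_ ?_)
  · exact (neg_add _ _).symm
  · exact (add_assoc _ _ _).symm

end Cone

variable {φ} {S : Set ℤ}

theorem IsβQuasiIso.exists_totD_eq (hφ : φ.IsβQuasiIso) (hS : ∀ n ∈ S, n - 2 ∈ S) {x : M₁.Tot}
    {y : M₂.Tot} (hx : ∀ n ∈ S, M₁.totD x (n - 1) = 0)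
    (hxy : ∀ n ∈ S, M₂.totD y n = φ.tot x n) : ∃ u, ∀ n ∈ S, M₁.totD u n = x n := by
  obtain ⟨e, he⟩ := hφ.isβAcyclic_cone.exists_totD_eq (S := {n | n - 1 ∈ S})
    (fun n hn => by simpa [sub_right_comm] using hS _ hn) (w := φ.conePair x (-y)) fun n hn => by
      rw [totD_conePair]
      refine Prod.ext ?_ ?_
      · exact neg_eq_zero.2 (hx _ hn)
      · change M₂.totD (-y) (n - 1) + φ.tot x (n - 1) = 0
        rw [map_neg, Pi.neg_apply, hxy _ hn, neg_add_cancel]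
  obtain ⟨u, v, rfl⟩ := φ.exists_eq_conePair e
  rw [totD_conePair] at he
  refine ⟨-u, fun n hn => ?_⟩
  obtain ⟨m, rfl⟩ : ∃ m, n = m - 1 := ⟨n + 1, by ring⟩
  rw [map_neg]
  exact congrArg Prod.fst (he m hn)

theorem IsβQuasiIso.exists_totD_eq_tot_sub (hφ : φ.IsβQuasiIso) (hS : ∀ n ∈ S, n - 2 ∈ S)
    {y : M₂.Tot} (hy : ∀ n ∈ S, M₂.totD y (n - 1) = 0) :
    ∃ u v, (∀ n ∈ S, M₁.totD u (n - 1) = 0) ∧ ∀ n ∈ S, M₂.totD v n = φ.tot u n - y n := by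
  obtain ⟨e, he⟩ := hφ.isβAcyclic_cone.exists_totD_eq hS (w := φ.conePair 0 y) fun n hn => by
    rw [totD_conePair, map_zero, map_zero, neg_zero, add_zero]
    exact Prod.ext rfl (hy n hn)
  obtain ⟨u, v, rfl⟩ := φ.exists_eq_conePair e
  rw [totD_conePair] at he
  refine ⟨u, -v, fun n hn => neg_eq_zero.1 (congrArg Prod.fst (he n hn)), fun n hn => ?_⟩
  have hv : M₂.totD v n + φ.tot u n = y n := congrArg Prod.snd (he n hn)
  rw [map_neg, Pi.neg_apply, ← hv]
  abel

end Hom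

section Plus

variable (M : Mixed κ) (r : ℤ)

/-- The projection of the product of all components onto `^+C^r`. -/
def toPlus : M.Tot →ₗ[κ] plusC M r :=
  LinearMap.pi fun k => LinearMap.proj (r - 2 * (k : ℤ))

theorem toPlus_surjective : Function.Surjective (M.toPlus r) :=
  surjective_pi_comp_of_injective fun _ _ h => by lia

theorem fcast_toPlus {s : ℤ} (h : s = r) (w : M.Tot) :
    fcast (κ := κ) (C := plusC M) h (M.toPlus s w) = M.toPlus r w := by
  subst h
  rfl

theorem plusDelta_toPlus (w : M.Tot) :
    plusDelta M r (M.toPlus r w) = M.toPlus (r - 1) (M.totD w) := by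
  funext k
  change _ = M.totD w (r - 1 - 2 * (k : ℤ))
  rw [totD_apply, add_comm, totδ_apply (m := r - 2 * ((k + 1 : ℕ) : ℤ)) (by push_cast; ring),
    totβ_apply (m := r - 2 * (k : ℤ)) (by ring)]
  rfl

/-- The degrees of the components of `^+C^r`. -/
def plusDegrees (r : ℤ) : Set ℤ := Set.range fun k : ℕ => r - 2 * (k : ℤ)

variable {M r}

theorem sub_two_mem_plusDegrees (n : ℤ) (hn : n ∈ plusDegrees r) : n - 2 ∈ plusDegrees r := by
  obtain ⟨k, rfl⟩ := hn
  exact ⟨k + 1, by push_cast; ring⟩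

theorem toPlus_eq_iff {w w' : M.Tot} :
    M.toPlus r w = M.toPlus r w' ↔ ∀ n ∈ plusDegrees r, w n = w' n :=
  by rw [plusDegrees, Set.forall_mem_range, funext_iff]; rfl

theorem toPlus_mem_bcycles_iff {w : M.Tot} : M.toPlus r w ∈ bcycles (plusDelta M) r ↔
    ∀ n ∈ plusDegrees r, M.totD w (n - 1) = 0 := by
  rw [bcycles, LinearMap.mem_ker, plusDelta_toPlus, plusDegrees, Set.forall_mem_range, funext_iff]
  refine forall_congr' fun k => ?_
  change M.totD w (r - 1 - 2 * (k : ℤ)) = 0 ↔ _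
  rw [sub_right_comm]

theorem toPlus_mem_bbound_iff {w : M.Tot} : M.toPlus r w ∈ bbound (plusDelta M) r ↔
    ∃ y, ∀ n ∈ plusDegrees r, M.totD y n = w n := by
  rw [mem_bbound_iff_s3 (add_sub_cancel_right r 1), (toPlus_surjective M (r + 1)).exists]
  simp only [plusDelta_toPlus, fcast_toPlus, toPlus_eq_iff]

end Plus

section Pprod

variable (M : Mixed κ) (r : ℤ)

/-- The projection of the product of all components onto `𝕡C^r`. -/
def toPprod : M.Tot →ₗ[κ] pprodC M r :=
  LinearMap.pi fun n => LinearMap.proj n.1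

theorem toPprod_surjective : Function.Surjective (M.toPprod r) :=
  surjective_pi_comp_of_injective Subtype.val_injective

theorem fcast_toPprod {s : ℤ} (h : s = r) (w : M.Tot) :
    fcast (κ := κ) (C := pprodC M) h (M.toPprod s w) = M.toPprod r w := by
  subst h
  rfl

theorem pprodD_toPprod (w : M.Tot) : pprodD M r (M.toPprod r w) = M.toPprod (r + 1) (M.totD w) :=
  rfl

variable {M r}

theorem toPprod_eq_iff {w w' : M.Tot} :
    M.toPprod r w = M.toPprod r w' ↔ ∀ n ∈ {n | n % 2 = r % 2}, w n = w' n :=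
  funext_iff.trans Subtype.forall

theorem toPprod_mem_cocycles_iff {w : M.Tot} : M.toPprod r w ∈ cocycles (pprodD M) r ↔
    ∀ n ∈ {n | n % 2 = r % 2}, M.totD w (n - 1) = 0 := by
  rw [cocycles, LinearMap.mem_ker, pprodD_toPprod, ← map_zero (M.toPprod (r + 1)), toPprod_eq_iff]
  refine ⟨fun h n hn => h (n - 1) (by grind), fun h n hn => ?_⟩
  rw [← add_sub_cancel_right n 1]
  exact h (n + 1) (by grind)

theorem toPprod_mem_cobound_iff {w : M.Tot} : M.toPprod r w ∈ cobound (pprodD M) r ↔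
    ∃ y, ∀ n ∈ {n | n % 2 = r % 2}, M.totD y n = w n := by
  rw [mem_cobound_iff_s3 (sub_add_cancel r 1), (toPprod_surjective M (r - 1)).exists]
  simp only [pprodD_toPprod, fcast_toPprod, toPprod_eq_iff]

end Pprod

namespace Hom

variable {M₁ M₂ : Mixed κ} (φ : Hom M₁ M₂)

theorem plusDelta_plusMap (r : ℤ) (x : plusC M₁ r) :
    plusDelta M₂ r (plusMap φ.app r x) = plusMap φ.app (r - 1) (plusDelta M₁ r x) := by
  obtain ⟨w, rfl⟩ := toPlus_surjective M₁ r x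
  rw [plusDelta_toPlus]
  exact (plusDelta_toPlus M₂ r (φ.tot w)).trans (congrArg _ (φ.totD_tot w))

theorem pprodD_pprodMap (r : ℤ) (x : pprodC M₁ r) :
    pprodD M₂ r (pprodMap φ.app r x) = pprodMap φ.app (r + 1) (pprodD M₁ r x) := by
  obtain ⟨w, rfl⟩ := toPprod_surjective M₁ r x
  exact congrArg (M₂.toPprod (r + 1)) (φ.totD_tot w)

variable {φ}

theorem IsβQuasiIso.bijective_hMap₂_plus (hφ : φ.IsβQuasiIso) (r : ℤ) :
    Function.Bijective (hMap₂ (plusDelta M₁) (plusDelta M₂) r r (plusMap φ.app r)) := by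
  rw [hMap₂_bijective_iff φ.plusDelta_plusMap, (toPlus_surjective M₁ r).forall,
    (toPlus_surjective M₂ r).forall]
  refine ⟨fun x hx hφx => ?_, fun y hy => ?_⟩
  · obtain ⟨y, hy⟩ := (toPlus_mem_bbound_iff (w := φ.tot x)).1 hφx
    exact toPlus_mem_bbound_iff.2 <|
      hφ.exists_totD_eq sub_two_mem_plusDegrees (toPlus_mem_bcycles_iff.1 hx) hy
  · obtain ⟨u, v, hu, hv⟩ := hφ.exists_totD_eq_tot_sub sub_two_mem_plusDegrees
      (toPlus_mem_bcycles_iff.1 hy)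
    exact ⟨M₁.toPlus r u, toPlus_mem_bcycles_iff.2 hu,
      (toPlus_mem_bbound_iff (w := φ.tot u - y)).2 ⟨v, hv⟩⟩

theorem IsβQuasiIso.bijective_Hmap₂_pprod (hφ : φ.IsβQuasiIso) (r : ℤ) :
    Function.Bijective (Hmap₂ (pprodD M₁) (pprodD M₂) r r (pprodMap φ.app r)) := by
  have sub_two_mem (n : ℤ) (hn : n ∈ {n | n % 2 = r % 2}) : n - 2 ∈ {n | n % 2 = r % 2} :=
    (Int.sub_emod_right n 2).trans hn
  rw [Hmap₂_bijective_iff φ.pprodD_pprodMap, (toPprod_surjective M₁ r).forall,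
    (toPprod_surjective M₂ r).forall]
  refine ⟨fun x hx hφx => ?_, fun y hy => ?_⟩
  · obtain ⟨y, hy⟩ := (toPprod_mem_cobound_iff (w := φ.tot x)).1 hφx
    exact toPprod_mem_cobound_iff.2 <|
      hφ.exists_totD_eq sub_two_mem (toPprod_mem_cocycles_iff.1 hx) hy
  · obtain ⟨u, v, hu, hv⟩ := hφ.exists_totD_eq_tot_sub sub_two_mem
      (toPprod_mem_cocycles_iff.1 hy)
    exact ⟨M₁.toPprod r u, toPprod_mem_cocycles_iff.2 hu,
      (toPprod_mem_cobound_iff (w := φ.tot u - y)).2 ⟨v, hv⟩⟩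

end Hom

end Mixed

/-- if a morphism of mixed complexes induces an isomorphism on the
homology `H_n(C, β)` for every `n`, then it induces isomorphisms on `^+H^δ_r`
and on `𝕡H^r` for every `r`. -/
theorem statement3 (κ : Type) [Field κ] (M₁ M₂ : Mixed κ)
    (f : ∀ n : ℤ, M₁.C n →ₗ[κ] M₂.C n)
    (hδ : ∀ (n : ℤ) (x : M₁.C n), M₂.δ n (f n x) = f (n + 1) (M₁.δ n x))
    (hβ : ∀ (n : ℤ) (x : M₁.C n), M₂.β n (f n x) = f (n - 1) (M₁.β n x))
    (hiso : ∀ n : ℤ, Function.Bijective (hMap₂ M₁.β M₂.β n n (f n))) :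
    (∀ r : ℤ, Function.Bijective (hMap₂ (plusDelta M₁) (plusDelta M₂) r r (plusMap f r))) ∧
    (∀ r : ℤ, Function.Bijective (Hmap₂ (pprodD M₁) (pprodD M₂) r r (pprodMap f r))) := by
  let φ : M₁.Hom M₂ := ⟨f, hδ, hβ⟩
  have hφ : φ.IsβQuasiIso := hiso
  exact ⟨hφ.bijective_hMap₂_plus, hφ.bijective_Hmap₂_pprod⟩

end CDGA
end
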